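/- arXiv:1604.07977 — 8 statements merged into one kernel-verified Lean document; each statement's English description precedes it below -/
import Mathlib

section
/- Let n be a positive integer and let Φ_n(q) ∈ ℤ[q] be the n-th cyclotomic polynomial. Then Φ_n(q) divides the q-Fibonacci polynomial F_{n+1}(q) if and only if n ≡ 2 (mod 5) or n ≡ 3 (mod 5) (i.e. n ≡ ±2 (mod 5)). -/
/-!
The proof evaluates Schur's finite form of the Rogers–Ramanujan identity
`F_{n+1}(q) = ∑_j (-1)^j q^(j(5j+1)/2) [n, ⌊(n-5j)/2⌋]`
(`schur_identity`) at a primitive `n`-th root of unity `ζ`, where `Φ_n ∣ F_{n+1}` means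
`F_{n+1}(ζ) = 0` because `Φ_n` is the minimal polynomial of `ζ`.

At `q = ζ` the Gaussian binomial `[n, k]` vanishes unless `k = 0` or `k = n`
(`qBin_primitiveRoot`), so only the `j` with `n - 5j ∈ {0, 1, 2n, 2n + 1}` contribute. There is no
such `j` if `n ≡ ±2 (mod 5)`; there is exactly one if `n ≡ ±1 (mod 5)`, leaving plus or minus a
power of `ζ`; and if `5 ∣ n` there are two, `j = ±n/5`, whose contributions have the same sign and
add up to a nonzero number, because the ratio `ζ^(n/5)` of the two powers is not `-1`.

Schur's identity itself follows by checking the recurrence `D_n = D_{n-1} + q^(n-1) D_{n-2}` for the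
right-hand side with the two `q`-Pascal rules. The floor makes the shape of the terms depend on the
parities of `n` and `j`, so even and odd `n` have separate sums (`schurEven`, `schurOdd`) and the
terms `j = 2m` and `j = 2m + 1` are paired.
-/

open Polynomial

/-- The Schur–Carlitz q-Fibonacci polynomials: F₀ = 0, F₁ = 1,
    Fₙ = Fₙ₋₁ + q^(n-2) Fₙ₋₂ for n ≥ 2. -/
noncomputable def qFibF : ℕ → Polynomial ℤ
  | 0 => 0
  | 1 => 1
  | (n + 2) => qFibF (n + 1) + X ^ n * qFibF n

/-! ### Gaussian binomial coefficients -/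

/-- The Gaussian binomial coefficient `[n, k]` evaluated at `q`, with the lower index ranging over
all of `ℤ` (the value is `0` outside `0 ≤ k ≤ n`), defined by the `q`-Pascal rule. -/
noncomputable def qBin {K : Type*} [Field K] (q : K) : ℕ → ℤ → K
  | 0, k => if k = 0 then 1 else 0
  | n + 1, k => qBin q n (k - 1) + q ^ k * qBin q n k

section

variable {K : Type*} [Field K] {q : K}

theorem qBin_succ (n : ℕ) (k : ℤ) :
    qBin q (n + 1) k = qBin q n (k - 1) + q ^ k * qBin q n k := rfl

theorem qBin_of_neg (n : ℕ) : ∀ k : ℤ, k < 0 → qBin q n k = 0 := by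
  induction n with
  | zero => intro k hk; simp [qBin, hk.ne]
  | succ n ih => intro k hk; rw [qBin_succ, ih _ hk, ih _ (by lia)]; simp

theorem qBin_of_gt (n : ℕ) : ∀ k : ℤ, (n : ℤ) < k → qBin q n k = 0 := by
  induction n with
  | zero =>
    intro k hk
    have : k ≠ 0 := by rintro rfl; simp at hk
    simp [qBin, this]
  | succ n ih =>
    intro k hk
    push_cast at hk
    rw [qBin_succ, ih _ (by lia), ih _ (by lia)]; simp

theorem qBin_zero_right (n : ℕ) : qBin q n 0 = 1 := by
  induction n with
  | zero => simp [qBin]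
  | succ n ih => rw [qBin_succ, ih, qBin_of_neg _ _ (by lia)]; simp

theorem qBin_self (n : ℕ) : qBin q n n = 1 := by
  induction n with
  | zero => simp [qBin]
  | succ n ih =>
    rw [qBin_succ, qBin_of_gt n ((n + 1 : ℕ) : ℤ) (by push_cast; lia)]
    push_cast
    simp [ih]

/-- The mirror image of the defining `q`-Pascal rule. -/
theorem qBin_succ' (hq : q ≠ 0) (n : ℕ) : ∀ k : ℤ,
    qBin q (n + 1) k = qBin q n k + q ^ ((n : ℤ) + 1 - k) * qBin q n (k - 1) := by
  induction n with
  | zero =>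
    intro k
    rw [qBin_succ]
    by_cases h0 : k = 0
    · subst h0; simp [qBin]
    by_cases h1 : k = 1
    · subst h1; simp [qBin]
    · have : k - 1 ≠ 0 := by lia
      simp [qBin, h0, this]
  | succ n ih =>
    intro k
    have e1 : q ^ k * q ^ ((n : ℤ) + 1 - k) = q ^ ((n : ℤ) + 1) := by
      rw [← zpow_add₀ hq]; congr 1; ring
    have e2 : q ^ ((n : ℤ) + 2 - k) * q ^ (k - 1) = q ^ ((n : ℤ) + 1) := by
      rw [← zpow_add₀ hq]; congr 1; ring
    have h1 := ih k
    have h2 := ih (k - 1)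
    have h3 := qBin_succ (q := q) n k
    have h4 := qBin_succ (q := q) n (k - 1)
    have e3 : (n : ℤ) + 1 - (k - 1) = (n : ℤ) + 2 - k := by ring
    have e4 : ((n + 1 : ℕ) : ℤ) + 1 - k = (n : ℤ) + 2 - k := by push_cast; ring
    rw [e3] at h2
    rw [qBin_succ, e4]
    linear_combination h2 + q ^ k * h1 - h3 - q ^ ((n : ℤ) + 2 - k) * h4 +
      (e1 - e2) * qBin q n (k - 1)

/-- Absorption, obtained by comparing the two `q`-Pascal rules. -/
theorem qBin_absorb (hq : q ≠ 0) (n : ℕ) (k : ℤ) :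
    (1 - q ^ k) * qBin q (n + 1) k = (1 - q ^ (n + 1)) * qBin q n (k - 1) := by
  have e1 : q ^ k * q ^ ((n : ℤ) + 1 - k) = q ^ (n + 1) := by
    rw [← zpow_add₀ hq, ← zpow_natCast]; congr 1; push_cast; ring
  linear_combination qBin_succ (q := q) n k - q ^ k * qBin_succ' hq n k - qBin q n (k - 1) * e1

/-- At a primitive `n`-th root of unity the Gaussian binomials `[n, k]` vanish for `0 < k < n`. -/
theorem qBin_primitiveRoot {n : ℕ} (hn : 0 < n) (h : IsPrimitiveRoot q n) (k : ℤ) :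
    qBin q n k = (if k = 0 then 1 else 0) + (if k = n then 1 else 0) := by
  by_cases h0 : k = 0
  · subst h0
    have : (0 : ℤ) ≠ n := by lia
    simp [qBin_zero_right, this]
  by_cases h1 : k = n
  · rw [h1, qBin_self]; simp [hn.ne']
  simp only [h0, h1, if_false, add_zero]
  rcases lt_or_ge k 0 with h2 | h2
  · exact qBin_of_neg _ _ h2
  rcases lt_or_ge (n : ℤ) k with h3 | h3
  · exact qBin_of_gt _ _ h3
  obtain ⟨m, rfl⟩ : ∃ m, n = m + 1 := ⟨n - 1, by lia⟩
  have h4 := qBin_absorb (h.ne_zero hn.ne') m k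
  rw [h.pow_eq_one, sub_self, zero_mul, mul_eq_zero] at h4
  refine h4.resolve_left fun h5 => ?_
  have h6 := Int.le_of_dvd (by lia) ((h.zpow_eq_one_iff_dvd k).1 (sub_eq_zero.1 h5).symm)
  lia

/-! ### Schur's identity -/

/-- Telescoping over a symmetric interval of integers. -/
theorem sum_Ico_sub_shift (g : ℤ → K) (M : ℕ) :
    ∑ m ∈ Finset.Ico (-(M : ℤ)) M, (g m - g (m + 1)) = g (-M) - g M := by
  have h : ∀ k : ℤ, -(M : ℤ) ≤ k →
      ∑ m ∈ Finset.Ico (-(M : ℤ)) k, (g m - g (m + 1)) = g (-M) - g k := by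
    intro k hk
    induction k, hk using Int.leInduction with
    | base => simp
    | succ k hk ih =>
      have : Finset.Ico (-(M : ℤ)) (k + 1) = insert k (Finset.Ico (-(M : ℤ)) k) := by
        ext x; simp only [Finset.mem_Ico, Finset.mem_insert]; lia
      rw [this, Finset.sum_insert (by simp), ih]; ring
  exact h _ (by lia)

/-- Schur's alternating sum for the even index `2N`, its `j = 2m` and `j = 2m + 1` terms grouped
together and truncated to `-M ≤ m < M`. -/
noncomputable def schurEven (q : K) (M N : ℕ) : K :=
  ∑ m ∈ Finset.Ico (-(M : ℤ)) M,
    (q ^ (m * (10 * m + 1)) * qBin q (2 * N) (N - 5 * m) -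
      q ^ ((2 * m + 1) * (5 * m + 3)) * qBin q (2 * N) (N - 5 * m - 3))

/-- Schur's alternating sum for the odd index `2N + 1`, grouped and truncated as in `schurEven`. -/
noncomputable def schurOdd (q : K) (M N : ℕ) : K :=
  ∑ m ∈ Finset.Ico (-(M : ℤ)) M,
    (q ^ (m * (10 * m + 1)) * qBin q (2 * N + 1) (N - 5 * m) -
      q ^ ((2 * m + 1) * (5 * m + 3)) * qBin q (2 * N + 1) (N - 5 * m - 2))

/-- Here the terms cancel only after a shift of `m`, so the truncation must be wide enough for the
boundary terms to vanish. -/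
theorem schurEven_succ (hq : q ≠ 0) (M N : ℕ) (hM : N < M) :
    schurEven q M (N + 1) = schurOdd q M N + q ^ (2 * N + 1) * schurEven q M N := by
  let g : ℤ → K := fun m => q ^ (10 * m ^ 2 - 4 * m + N + 1) * qBin q (2 * N) (N + 1 - 5 * m)
  have hg : ∑ m ∈ Finset.Ico (-(M : ℤ)) M, (g m - g (m + 1)) = 0 := by
    rw [sum_Ico_sub_shift]
    simp only [g]
    rw [qBin_of_gt _ _ (by push_cast; lia), qBin_of_neg _ _ (by lia)]
    simp
  rw [← sub_eq_zero, ← hg, schurEven, schurOdd, schurEven, Finset.mul_sum,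
    ← Finset.sum_add_distrib, ← Finset.sum_sub_distrib]
  refine Finset.sum_congr rfl fun m _ => ?_
  simp only [g]
  rw [show 2 * (N + 1) = 2 * N + 1 + 1 by ring]
  have a1 := qBin_succ (q := q) (2 * N + 1) (N + 1 - 5 * m)
  have a2 := qBin_succ' hq (2 * N + 1) (N + 1 - 5 * m - 3)
  have a3 := qBin_succ' hq (2 * N) (N + 1 - 5 * m)
  have a4 := qBin_succ (q := q) (2 * N) (N + 1 - 5 * m - 3 - 1)
  have hN : q ^ (2 * N + 1) = q ^ (2 * (N : ℤ) + 1) := by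
    rw [← zpow_natCast]; push_cast; rfl
  rw [show (N : ℤ) + 1 - 5 * m - 1 = N - 5 * m by ring] at a1 a3
  rw [show (N : ℤ) + 1 - 5 * m - 3 - 1 = N - 5 * m - 3 by ring] at a2 a4
  rw [show (N : ℤ) - 5 * m - 3 - 1 = N + 1 - 5 * (m + 1) by ring] at a4
  rw [show (N : ℤ) + 1 - 5 * m - 3 = N - 5 * m - 2 by ring] at a2
  push_cast at a1 a2 a3 a4 ⊢
  rw [show (N : ℤ) + 1 - 5 * m - 3 = N - 5 * m - 2 by ring, hN]
  have e1 : q ^ ((N : ℤ) + 1 - 5 * m) * q ^ (2 * (N : ℤ) + 1 - (N + 1 - 5 * m)) =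
      q ^ (2 * (N : ℤ) + 1) := by
    rw [← zpow_add₀ hq]; congr 1; ring
  have e2 : q ^ (2 * (N : ℤ) + 1 + 1 - (N - 5 * m - 2)) * q ^ ((N : ℤ) - 5 * m - 3) =
      q ^ (2 * (N : ℤ) + 1) := by
    rw [← zpow_add₀ hq]; congr 1; ring
  have e3 : q ^ (m * (10 * m + 1)) * q ^ ((N : ℤ) + 1 - 5 * m) =
      q ^ (10 * m ^ 2 - 4 * m + N + 1) := by
    rw [← zpow_add₀ hq]; congr 1; ring
  have e4 : q ^ ((2 * m + 1) * (5 * m + 3)) * q ^ (2 * (N : ℤ) + 1 + 1 - (N - 5 * m - 2)) =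
      q ^ (10 * (m + 1) ^ 2 - 4 * (m + 1) + N + 1) := by
    rw [← zpow_add₀ hq]; congr 1; ring
  linear_combination q ^ (m * (10 * m + 1)) * a1 - q ^ ((2 * m + 1) * (5 * m + 3)) * a2 +
    q ^ (m * (10 * m + 1)) * q ^ ((N : ℤ) + 1 - 5 * m) * a3 -
    q ^ ((2 * m + 1) * (5 * m + 3)) * q ^ (2 * (N : ℤ) + 1 + 1 - (N - 5 * m - 2)) * a4 +
    q ^ (m * (10 * m + 1)) * qBin q (2 * N) (N - 5 * m) * e1 -
    q ^ ((2 * m + 1) * (5 * m + 3)) * qBin q (2 * N) (N - 5 * m - 3) * e2 +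
    qBin q (2 * N) (N + 1 - 5 * m) * e3 - qBin q (2 * N) (N + 1 - 5 * (m + 1)) * e4

/-- Here the cancellation takes place for each `m` separately. -/
theorem schurOdd_succ (hq : q ≠ 0) (M N : ℕ) :
    schurOdd q M (N + 1) = schurEven q M (N + 1) + q ^ (2 * N + 2) * schurOdd q M N := by
  rw [schurOdd, schurEven, schurOdd, Finset.mul_sum, ← Finset.sum_add_distrib]
  refine Finset.sum_congr rfl fun m _ => ?_
  rw [show 2 * (N + 1) = 2 * N + 1 + 1 by ring]
  have hN : q ^ (2 * N + 2) = q ^ (2 * (N : ℤ) + 2) := by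
    rw [← zpow_natCast]; push_cast; rfl
  have a1 := qBin_succ' hq (2 * N + 1 + 1) (N + 1 - 5 * m)
  have a2 := qBin_succ (q := q) (2 * N + 1 + 1) (N + 1 - 5 * m - 2)
  have a3 := qBin_succ (q := q) (2 * N + 1) (N - 5 * m)
  have a4 := qBin_succ' hq (2 * N + 1) (N - 5 * m - 1)
  push_cast at a1 a2 a3 a4 ⊢
  rw [show (N : ℤ) + 1 - 5 * m - 1 = N - 5 * m by ring] at a1
  rw [show (N : ℤ) + 1 - 5 * m - 2 = N - 5 * m - 1 by ring] at a2 ⊢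
  rw [show (N : ℤ) + 1 - 5 * m - 3 = N - 5 * m - 1 - 1 by ring, hN]
  rw [show (N : ℤ) - 5 * m - 1 - 1 = N - 5 * m - 2 by ring] at a2 a4 ⊢
  have e1 : q ^ (2 * (N : ℤ) + 1 + 1 + 1 - (N + 1 - 5 * m)) * q ^ ((N : ℤ) - 5 * m) =
      q ^ (2 * (N : ℤ) + 2) := by
    rw [← zpow_add₀ hq]; congr 1; ring
  have e2 : q ^ ((N : ℤ) - 5 * m - 1) * q ^ (2 * (N : ℤ) + 1 + 1 - (N - 5 * m - 1)) =
      q ^ (2 * (N : ℤ) + 2) := by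
    rw [← zpow_add₀ hq]; congr 1; ring
  have e3 : q ^ (m * (10 * m + 1)) * q ^ (2 * (N : ℤ) + 1 + 1 + 1 - (N + 1 - 5 * m)) =
      q ^ ((2 * m + 1) * (5 * m + 3)) * q ^ ((N : ℤ) - 5 * m - 1) := by
    rw [← zpow_add₀ hq, ← zpow_add₀ hq]; congr 1; ring
  linear_combination q ^ (m * (10 * m + 1)) * a1 - q ^ ((2 * m + 1) * (5 * m + 3)) * a2 +
    q ^ (m * (10 * m + 1)) * q ^ (2 * (N : ℤ) + 1 + 1 + 1 - (N + 1 - 5 * m)) * a3 -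
    q ^ ((2 * m + 1) * (5 * m + 3)) * q ^ ((N : ℤ) - 5 * m - 1) * a4 +
    q ^ (m * (10 * m + 1)) * qBin q (2 * N + 1) (N - 5 * m) * e1 -
    q ^ ((2 * m + 1) * (5 * m + 3)) * qBin q (2 * N + 1) (N - 5 * m - 2) * e2 +
    qBin q (2 * N + 1) (N - 5 * m - 1) * e3

theorem qFibF_add_two (n : ℕ) : qFibF (n + 2) = qFibF (n + 1) + X ^ n * qFibF n := by
  rw [qFibF]

/-- Schur's identity `F_{n+1}(q) = ∑_j (-1)^j q^(j(5j+1)/2) [n, ⌊(n-5j)/2⌋]`, for `n = 2N` and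
`n = 2N + 1`: the alternating sums satisfy the recurrence of the `q`-Fibonacci polynomials. -/
theorem schur_identity (hq : q ≠ 0) (M N : ℕ) (hM : N < M) :
    schurEven q M N = aeval q (qFibF (2 * N + 1)) ∧
      schurOdd q M N = aeval q (qFibF (2 * N + 2)) := by
  induction N with
  | zero =>
    constructor
    · rw [schurEven, Finset.sum_eq_single 0]
      · rw [qBin_of_neg _ (_ - 3) (by simp)]
        simp [qBin_zero_right, qFibF]
      · intro m _ hm
        rcases lt_or_gt_of_ne hm with h | h
        · rw [qBin_of_gt _ _ (by push_cast; lia), qBin_of_gt _ _ (by push_cast; lia)]; simp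
        · rw [qBin_of_neg _ _ (by push_cast; lia), qBin_of_neg _ _ (by push_cast; lia)]; simp
      · intro h; exact absurd (Finset.mem_Ico.2 ⟨by lia, by lia⟩) h
    · rw [schurOdd, Finset.sum_eq_single 0]
      · rw [qBin_of_neg _ (_ - 2) (by simp)]
        simp [qBin_zero_right, qFibF]
      · intro m _ hm
        rcases lt_or_gt_of_ne hm with h | h
        · rw [qBin_of_gt _ _ (by push_cast; lia), qBin_of_gt _ _ (by push_cast; lia)]; simp
        · rw [qBin_of_neg _ _ (by push_cast; lia), qBin_of_neg _ _ (by push_cast; lia)]; simp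
      · intro h; exact absurd (Finset.mem_Ico.2 ⟨by lia, by lia⟩) h
  | succ N ih =>
    obtain ⟨h1, h2⟩ := ih (by lia)
    have h3 : schurEven q M (N + 1) = aeval q (qFibF (2 * (N + 1) + 1)) := by
      rw [schurEven_succ hq M N (by lia), h1, h2,
        show 2 * (N + 1) + 1 = (2 * N + 1) + 2 by ring, qFibF_add_two (2 * N + 1)]
      simp
    refine ⟨h3, ?_⟩
    rw [schurOdd_succ hq, h3, h2, show 2 * (N + 1) + 2 = (2 * N + 2) + 2 by ring,
      qFibF_add_two (2 * N + 2)]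
    simp [mul_add]

/-! ### Schur's sums at a primitive root of unity -/

theorem sum_mul_ite_eq_single {s : Finset ℤ} (c : ℤ → K) (p : ℤ → Prop) [DecidablePred p] (r : ℤ)
    (hr : r ∈ s) (h : ∀ m, p m ↔ m = r) : ∑ m ∈ s, c m * (if p m then 1 else 0) = c r := by
  simp [h, hr]

theorem sum_mul_ite_eq_zero {s : Finset ℤ} (c : ℤ → K) (p : ℤ → Prop) [DecidablePred p]
    (h : ∀ m, ¬ p m) : ∑ m ∈ s, c m * (if p m then (1 : K) else 0) = 0 := by
  simp [h]

/-- At a primitive root of unity only the Gaussian binomials `[n, 0] = [n, n] = 1` contribute to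
Schur's sum. -/
theorem schurEven_primitiveRoot {N : ℕ} (hN : 0 < 2 * N) (h : IsPrimitiveRoot q (2 * N)) (M : ℕ) :
    schurEven q M N =
      ∑ m ∈ Finset.Ico (-(M : ℤ)) M,
        q ^ (m * (10 * m + 1)) * (if (N : ℤ) - 5 * m = 0 then 1 else 0) +
      ∑ m ∈ Finset.Ico (-(M : ℤ)) M,
        q ^ (m * (10 * m + 1)) * (if (N : ℤ) - 5 * m = (2 * N : ℕ) then 1 else 0) -
      ∑ m ∈ Finset.Ico (-(M : ℤ)) M,
        q ^ ((2 * m + 1) * (5 * m + 3)) * (if (N : ℤ) - 5 * m - 3 = 0 then 1 else 0) -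
      ∑ m ∈ Finset.Ico (-(M : ℤ)) M,
        q ^ ((2 * m + 1) * (5 * m + 3)) * (if (N : ℤ) - 5 * m - 3 = (2 * N : ℕ) then 1 else 0) := by
  rw [schurEven, ← Finset.sum_add_distrib, ← Finset.sum_sub_distrib, ← Finset.sum_sub_distrib]
  refine Finset.sum_congr rfl fun m _ => ?_
  rw [qBin_primitiveRoot hN h, qBin_primitiveRoot hN h]
  ring

theorem schurOdd_primitiveRoot {N : ℕ} (h : IsPrimitiveRoot q (2 * N + 1)) (M : ℕ) :
    schurOdd q M N =
      ∑ m ∈ Finset.Ico (-(M : ℤ)) M,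
        q ^ (m * (10 * m + 1)) * (if (N : ℤ) - 5 * m = 0 then 1 else 0) +
      ∑ m ∈ Finset.Ico (-(M : ℤ)) M,
        q ^ (m * (10 * m + 1)) * (if (N : ℤ) - 5 * m = (2 * N + 1 : ℕ) then 1 else 0) -
      ∑ m ∈ Finset.Ico (-(M : ℤ)) M,
        q ^ ((2 * m + 1) * (5 * m + 3)) * (if (N : ℤ) - 5 * m - 2 = 0 then 1 else 0) -
      ∑ m ∈ Finset.Ico (-(M : ℤ)) M,
        q ^ ((2 * m + 1) * (5 * m + 3)) *
          (if (N : ℤ) - 5 * m - 2 = (2 * N + 1 : ℕ) then 1 else 0) := by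
  rw [schurOdd, ← Finset.sum_add_distrib, ← Finset.sum_sub_distrib, ← Finset.sum_sub_distrib]
  refine Finset.sum_congr rfl fun m _ => ?_
  rw [qBin_primitiveRoot (by lia) h, qBin_primitiveRoot (by lia) h]
  ring

/-- If two powers of `q` cancel, their ratio is `-1`, whose square is `1`. -/
theorem dvd_of_zpow_add_zpow_eq_zero {n : ℕ} (hn : 0 < n) (h : IsPrimitiveRoot q n) {a b : ℤ}
    (hab : q ^ a + q ^ b = 0) : (n : ℤ) ∣ 2 * (a - b) := by
  have hq := h.ne_zero hn.ne'
  rw [← h.zpow_eq_one_iff_dvd, mul_comm, zpow_mul, zpow_sub₀ hq, eq_neg_of_add_eq_zero_left hab,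
    neg_div, div_self (zpow_ne_zero _ hq)]
  norm_num

/-- By residue of `N` modulo `5`, at most one of the four sums survives, except when `5 ∣ N`: then
two powers of `q` of the same sign survive, and they do not cancel. -/
theorem schurEven_eq_zero_iff {N : ℕ} (hN : 0 < 2 * N) (h : IsPrimitiveRoot q (2 * N)) :
    schurEven q (N + 1) N = 0 ↔ (2 * N % 5 = 2 ∨ 2 * N % 5 = 3) := by
  have hq := h.ne_zero hN.ne'
  rw [schurEven_primitiveRoot hN h]
  obtain ⟨r, s, hs, hr⟩ : ∃ r s, s < 5 ∧ N = 5 * r + s :=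
    ⟨N / 5, N % 5, Nat.mod_lt _ (by lia), by lia⟩
  interval_cases s
  · rw [sum_mul_ite_eq_single _ _ (r : ℤ) (by rw [Finset.mem_Ico]; lia) (by lia),
      sum_mul_ite_eq_single _ _ (-r : ℤ) (by rw [Finset.mem_Ico]; lia) (by lia),
      sum_mul_ite_eq_zero _ _ (by lia), sum_mul_ite_eq_zero _ _ (by lia), sub_zero, sub_zero]
    refine iff_of_false (fun h0 => ?_) (by lia)
    have h1 := dvd_of_zpow_add_zpow_eq_zero hN h h0
    rw [show 2 * ((r : ℤ) * (10 * r + 1) - -r * (10 * -r + 1)) = 4 * r by ring] at h1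
    have h2 := Int.le_of_dvd (by lia) h1
    lia
  · rw [sum_mul_ite_eq_zero _ _ (by lia), sum_mul_ite_eq_zero _ _ (by lia),
      sum_mul_ite_eq_zero _ _ (by lia), sum_mul_ite_eq_zero _ _ (by lia)]
    exact iff_of_true (by simp) (by lia)
  · rw [sum_mul_ite_eq_zero _ _ (by lia), sum_mul_ite_eq_zero _ _ (by lia),
      sum_mul_ite_eq_zero _ _ (by lia),
      sum_mul_ite_eq_single _ _ (-r - 1 : ℤ) (by rw [Finset.mem_Ico]; lia) (by lia)]
    exact iff_of_false (by simp [zpow_ne_zero, hq]) (by lia)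
  · rw [sum_mul_ite_eq_zero _ _ (by lia), sum_mul_ite_eq_zero _ _ (by lia),
      sum_mul_ite_eq_single _ _ (r : ℤ) (by rw [Finset.mem_Ico]; lia) (by lia),
      sum_mul_ite_eq_zero _ _ (by lia)]
    exact iff_of_false (by simp [zpow_ne_zero, hq]) (by lia)
  · rw [sum_mul_ite_eq_zero _ _ (by lia), sum_mul_ite_eq_zero _ _ (by lia),
      sum_mul_ite_eq_zero _ _ (by lia), sum_mul_ite_eq_zero _ _ (by lia)]
    exact iff_of_true (by simp) (by lia)

/-- By residue of `N` modulo `5`, at most one of the four sums survives, except when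
`N ≡ 2 (mod 5)`: then two powers of `q` of the same sign survive, and they do not cancel. -/
theorem schurOdd_eq_zero_iff {N : ℕ} (h : IsPrimitiveRoot q (2 * N + 1)) :
    schurOdd q (N + 1) N = 0 ↔ ((2 * N + 1) % 5 = 2 ∨ (2 * N + 1) % 5 = 3) := by
  have hq := h.ne_zero (by lia)
  rw [schurOdd_primitiveRoot h]
  obtain ⟨r, s, hs, hr⟩ : ∃ r s, s < 5 ∧ N = 5 * r + s :=
    ⟨N / 5, N % 5, Nat.mod_lt _ (by lia), by lia⟩
  interval_cases s
  · rw [sum_mul_ite_eq_single _ _ (r : ℤ) (by rw [Finset.mem_Ico]; lia) (by lia),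
      sum_mul_ite_eq_zero _ _ (by lia), sum_mul_ite_eq_zero _ _ (by lia),
      sum_mul_ite_eq_zero _ _ (by lia)]
    exact iff_of_false (by simp [zpow_ne_zero, hq]) (by lia)
  · rw [sum_mul_ite_eq_zero _ _ (by lia), sum_mul_ite_eq_zero _ _ (by lia),
      sum_mul_ite_eq_zero _ _ (by lia), sum_mul_ite_eq_zero _ _ (by lia)]
    exact iff_of_true (by simp) (by lia)
  · rw [sum_mul_ite_eq_zero _ _ (by lia), sum_mul_ite_eq_zero _ _ (by lia),
      sum_mul_ite_eq_single _ _ (r : ℤ) (by rw [Finset.mem_Ico]; lia) (by lia),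
      sum_mul_ite_eq_single _ _ (-r - 1 : ℤ) (by rw [Finset.mem_Ico]; lia) (by lia),
      zero_add, zero_sub, ← neg_add', neg_eq_zero]
    refine iff_of_false (fun h0 => ?_) (by lia)
    have h1 := dvd_of_zpow_add_zpow_eq_zero (by lia) h h0
    rw [show 2 * ((2 * (r : ℤ) + 1) * (5 * r + 3) - (2 * (-r - 1) + 1) * (5 * (-r - 1) + 3)) =
      2 * (2 * r + 1) by ring] at h1
    have h2 := Int.le_of_dvd (by lia) h1
    lia
  · rw [sum_mul_ite_eq_zero _ _ (by lia), sum_mul_ite_eq_zero _ _ (by lia),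
      sum_mul_ite_eq_zero _ _ (by lia), sum_mul_ite_eq_zero _ _ (by lia)]
    exact iff_of_true (by simp) (by lia)
  · rw [sum_mul_ite_eq_zero _ _ (by lia),
      sum_mul_ite_eq_single _ _ (-r - 1 : ℤ) (by rw [Finset.mem_Ico]; lia) (by lia),
      sum_mul_ite_eq_zero _ _ (by lia), sum_mul_ite_eq_zero _ _ (by lia)]
    exact iff_of_false (by simp [zpow_ne_zero, hq]) (by lia)

end

theorem cyclotomic_dvd_qFibF_iff (n : ℕ) (hn : 0 < n) :
    Polynomial.cyclotomic n ℤ ∣ qFibF (n + 1) ↔ (n % 5 = 2 ∨ n % 5 = 3) := by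
  have h := Complex.isPrimitiveRoot_exp n hn.ne'
  rw [cyclotomic_eq_minpoly h hn, ← minpoly.isIntegrallyClosed_dvd_iff (h.isIntegral hn)]
  generalize Complex.exp (2 * Real.pi * Complex.I / n) = ζ at h
  have hζ := h.ne_zero hn.ne'
  obtain ⟨N, rfl | rfl⟩ := n.even_or_odd'
  · rw [← (schur_identity hζ (N + 1) N (by lia)).1, schurEven_eq_zero_iff hn h]
  · rw [← (schur_identity hζ (N + 1) N (by lia)).2, schurOdd_eq_zero_iff h]
end

section
/- For every positive integer m, the cyclotomic polynomial Φ_{5m}(q) divides the q-Fibonacci polynomial G_{5m}(q) in ℤ[q]. -/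
/-!
Let `q = ζ` be a primitive `5m`-th root of unity. Schur's finite form of the Rogers–Ramanujan
identities expresses the q-Fibonacci polynomials through Gaussian binomials:
`G_n(q) = ∑_j (-1)^j q^(j(5j-3)/2) [n; ⌊(n-5j)/2⌋ + 1]`, the sum being over all integers `j`.
It holds because the two q-Pascal rules turn the defect of the recurrence, term by term, into a
telescoping difference (`schurTerm_rec`).

For `n = 5m` the lower index `⌊5(m-j)/2⌋ + 1` is congruent to `1` or `3` modulo `5`, so it is never
a multiple of `5m`. Comparing the two q-Pascal rules shows that `[N; k]` vanishes at `q` as soon as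
`q^N = 1` and `q^k ≠ 1` (`gaussBinom_eq_zero_of_root`). Hence every term of Schur's sum is zero,
`G_{5m}(ζ) = 0`, and the minimal polynomial `Φ_{5m}` of `ζ` divides `G_{5m}`.
-/

open Polynomial

/-- The Schur–Carlitz q-Fibonacci polynomials G: G₀ = 0, G₁ = 1,
    Gₙ = Gₙ₋₁ + q^(n-1) Gₙ₋₂ for n ≥ 2. -/
noncomputable def qFibG : ℕ → Polynomial ℤ
  | 0 => 0
  | 1 => 1
  | (n + 2) => qFibG (n + 1) + X ^ (n + 1) * qFibG n

/-- The Gaussian binomial coefficient `[n; k]` at a point `q` of a field, defined through the first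
q-Pascal rule. The lower index is an arbitrary integer, with value `0` outside `0 ≤ k ≤ n`; powers
of `q` are integer powers, so the theory is meaningful for `q ≠ 0`. -/
noncomputable def gaussBinom {K : Type*} [Field K] (q : K) : ℕ → ℤ → K
  | 0, k => if k = 0 then 1 else 0
  | n + 1, k => gaussBinom q n (k - 1) + q ^ k * gaussBinom q n k

section

variable {K : Type*} [Field K] {q : K}

theorem gaussBinom_succ (n : ℕ) (k : ℤ) :
    gaussBinom q (n + 1) k = gaussBinom q n (k - 1) + q ^ k * gaussBinom q n k := rfl

/-- The second q-Pascal rule. -/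
theorem gaussBinom_succ' (hq : q ≠ 0) (n : ℕ) (k : ℤ) :
    gaussBinom q (n + 1) k = gaussBinom q n k + q ^ ((n : ℤ) + 1 - k) * gaussBinom q n (k - 1) := by
  induction n generalizing k with
  | zero =>
    simp only [gaussBinom]
    by_cases h0 : k = 0
    · subst h0; simp
    · by_cases h1 : k = 1
      · subst h1; simp
      · have : k - 1 ≠ 0 := by omega
        simp [h0, this]
  | succ n ih =>
    conv_lhs => rw [gaussBinom_succ (n + 1) k, ih (k - 1), ih k]
    rw [gaussBinom_succ n k,
      gaussBinom_succ n (k - 1)]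
    have e1 : q ^ ((n : ℤ) + 1 - (k - 1)) = q ^ (n + 2 : ℤ) / q ^ k := by
      rw [← zpow_sub₀ hq]; congr 1; ring
    have e2 : q ^ ((n : ℤ) + 1 - k) = q ^ (n + 2 : ℤ) / q ^ k / q := by
      rw [← zpow_sub₀ hq, div_eq_mul_inv, ← zpow_sub_one₀ hq]; congr 1; ring
    have e3 : q ^ (((n + 1 : ℕ) : ℤ) + 1 - k) = q ^ (n + 2 : ℤ) / q ^ k := by
      rw [← zpow_sub₀ hq]; push_cast; ring_nf
    have e4 : q ^ (k - 1) = q ^ k / q := by rw [zpow_sub_one₀ hq, div_eq_mul_inv]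
    have hk : q ^ k ≠ 0 := zpow_ne_zero _ hq
    rw [e1, e2, e3, e4]
    field_simp
    ring

theorem gaussBinom_of_neg (n : ℕ) (k : ℤ) (hk : k < 0) : gaussBinom q n k = 0 := by
  induction n generalizing k with
  | zero => simp [gaussBinom, hk.ne]
  | succ n ih => rw [gaussBinom_succ, ih k hk, ih (k - 1) (by omega)]; simp

theorem gaussBinom_of_gt (n : ℕ) (k : ℤ) (hk : (n : ℤ) < k) : gaussBinom q n k = 0 := by
  induction n generalizing k with
  | zero => simp only [gaussBinom]; rw [if_neg]; push_cast at hk; omega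
  | succ n ih =>
    push_cast at hk
    rw [gaussBinom_succ, ih k (by omega), ih (k - 1) (by omega)]; simp

/-- At a root of unity `q` with `q ^ N = 1`, the coefficient `[N; k]` vanishes unless `q ^ k = 1`. -/
theorem gaussBinom_eq_zero_of_root (hq : q ≠ 0) (N : ℕ) (hN : 0 < N) (h1 : q ^ N = 1) (k : ℤ)
    (hk : q ^ k ≠ 1) : gaussBinom q N k = 0 := by
  obtain ⟨n, rfl⟩ : ∃ n, N = n + 1 := ⟨N - 1, by omega⟩
  have p1 := gaussBinom_succ (q := q) n k
  have p2 := gaussBinom_succ' hq n k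
  have hk0 : q ^ k ≠ 0 := zpow_ne_zero _ hq
  have e : q ^ ((n : ℤ) + 1 - k) = (q ^ k)⁻¹ := by
    rw [zpow_sub₀ hq, show (n : ℤ) + 1 = ((n + 1 : ℕ) : ℤ) by push_cast; rfl, zpow_natCast, h1,
      one_div]
  rw [e] at p2
  have p3 : q ^ k * gaussBinom q (n + 1) k = q ^ k * gaussBinom q n k + gaussBinom q n (k - 1) := by
    rw [p2]; field_simp
  have : (q ^ k - 1) * gaussBinom q (n + 1) k = 0 := by
    rw [sub_mul, p3, p1]; ring
  exact (mul_eq_zero.1 this).resolve_left (sub_ne_zero.2 hk)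

end

/-- The exponent `j(5j-3)/2` in Schur's sum; the division is exact. -/
def schurExp (j : ℤ) : ℤ := j * (5 * j - 3) / 2

theorem schurExp_succ (j : ℤ) : schurExp (j + 1) = schurExp j + (5 * j + 1) := by
  unfold schurExp
  rw [show (j + 1) * (5 * (j + 1) - 3) = j * (5 * j - 3) + (5 * j + 1) * 2 by ring]
  exact Int.add_mul_ediv_right _ _ (by norm_num)

section

variable {K : Type*} [Field K] (q : K)

/-- The `j`-th term of Schur's sum for `G_n`; the division by `2` rounds down. -/
noncomputable def schurTerm (n : ℕ) (j : ℤ) : K :=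
  (-1) ^ j * q ^ schurExp j * gaussBinom q n (((n : ℤ) - 5 * j) / 2 + 1)

/-- The quantity whose differences in `j` measure how far the terms of Schur's sum are from
satisfying the q-Fibonacci recurrence from `n` and `n + 1` to `n + 2`. It is supported on the `j`
with the parity of `n`. -/
noncomputable def schurCarry (n : ℕ) (j : ℤ) : K :=
  if ((n : ℤ) - 5 * j) % 2 = 0 then
    (-1) ^ j * q ^ (schurExp j + (((n : ℤ) - 5 * j) / 2 + 2)) *
      gaussBinom q n (((n : ℤ) - 5 * j) / 2 + 2)
  else 0

variable {q}

theorem schurTerm_rec (hq : q ≠ 0) (n : ℕ) (j : ℤ) :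
    schurTerm q (n + 2) j - (schurTerm q (n + 1) j + q ^ (n + 1) * schurTerm q n j) =
      schurCarry q n j - schurCarry q n (j + 1) := by
  have hn : q ^ (n + 1) = q ^ ((n : ℤ) + 1) := by
    rw [← zpow_natCast]; push_cast; rfl
  unfold schurTerm schurCarry
  rw [hn, schurExp_succ, zpow_add_one₀ (show (-1 : K) ≠ 0 by simp)]
  generalize schurExp j = e
  rcases Int.emod_two_eq_zero_or_one ((n : ℤ) - 5 * j) with h | h
  · -- `n - 5j = 2c` is even: expand `[n+2; c+2]` by the first rule, then by the second.
    obtain ⟨c, hc⟩ : ∃ c, (n : ℤ) - 5 * j = 2 * c := ⟨((n : ℤ) - 5 * j) / 2, by omega⟩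
    rw [if_pos h, if_neg (by omega),
      show (((n + 2 : ℕ) : ℤ) - 5 * j) / 2 + 1 = c + 2 by push_cast; omega,
      show (((n + 1 : ℕ) : ℤ) - 5 * j) / 2 + 1 = c + 1 by push_cast; omega,
      show ((n : ℤ) - 5 * j) / 2 + 1 = c + 1 by omega,
      show ((n : ℤ) - 5 * j) / 2 + 2 = c + 2 by omega,
      gaussBinom_succ (n + 1) (c + 2), gaussBinom_succ' hq n (c + 2),
      show c + 2 - 1 = c + 1 by ring,
      show q ^ ((n : ℤ) + 1) = q ^ (c + 2) * q ^ ((n : ℤ) + 1 - (c + 2)) by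
        rw [← zpow_add₀ hq]; congr 1; ring,
      zpow_add₀ hq e]
    ring
  · -- `n - 5j = 2c + 1` is odd: expand `[n+2; c+2]` by the second rule, then by the first.
    obtain ⟨c, hc⟩ : ∃ c, (n : ℤ) - 5 * j = 2 * c + 1 := ⟨((n : ℤ) - 5 * j) / 2, by omega⟩
    rw [if_neg (by omega), if_pos (by omega),
      show (((n + 2 : ℕ) : ℤ) - 5 * j) / 2 + 1 = c + 2 by push_cast; omega,
      show (((n + 1 : ℕ) : ℤ) - 5 * j) / 2 + 1 = c + 2 by push_cast; omega,
      show ((n : ℤ) - 5 * j) / 2 + 1 = c + 1 by omega,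
      show ((n : ℤ) - 5 * (j + 1)) / 2 + 2 = c by omega,
      gaussBinom_succ' hq (n + 1) (c + 2),
      show c + 2 - 1 = c + 1 by ring,
      gaussBinom_succ n (c + 1),
      show c + 1 - 1 = c by ring,
      show q ^ ((n : ℤ) + 1) =
          q ^ (((n + 1 : ℕ) : ℤ) + 1 - (c + 2)) * q ^ (c + 1) by
        rw [← zpow_add₀ hq]; congr 1; push_cast; ring,
      show e + (5 * j + 1) + c = e + (((n + 1 : ℕ) : ℤ) + 1 - (c + 2)) by push_cast; omega,
      zpow_add₀ hq e]
    ring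

theorem schurCarry_eq_zero (n : ℕ) (j : ℤ) (hj : (n : ℤ) + 2 ≤ |j|) : schurCarry q n j = 0 := by
  unfold schurCarry
  split_ifs
  · rcases le_abs.1 hj with h | h
    · rw [gaussBinom_of_neg _ _ (by omega), mul_zero]
    · rw [gaussBinom_of_gt _ _ (by omega), mul_zero]
  · rfl

/-- Schur's formula, with the sum truncated to `-M ≤ j < M`. -/
theorem aeval_qFibG_eq_sum (hq : q ≠ 0) (M : ℕ) (hM : 0 < M) (n : ℕ) (hn : n ≤ M) :
    aeval q (qFibG n) = ∑ i ∈ Finset.range (2 * M), schurTerm q n ((i : ℤ) - M) := by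
  induction n using Nat.twoStepInduction with
  | zero =>
    rw [Finset.sum_eq_zero]
    · simp [qFibG]
    · intro i _
      simp only [schurTerm, gaussBinom]
      rw [if_neg (by push_cast; omega), mul_zero]
  | one =>
    rw [Finset.sum_eq_single M]
    · simp [qFibG, schurTerm, schurExp, gaussBinom]
    · intro i _ hi
      rcases lt_or_gt_of_ne hi with h | h
      · rw [schurTerm, gaussBinom_of_gt _ _ (by push_cast; omega), mul_zero]
      · rw [schurTerm, gaussBinom_of_neg _ _ (by push_cast; omega), mul_zero]
    · intro h
      simp only [Finset.mem_range] at h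
      omega
  | more n ih0 ih1 =>
    have tel := Finset.sum_range_sub' (fun i : ℕ => schurCarry q n ((i : ℤ) - M)) (2 * M)
    rw [schurCarry_eq_zero n _ (le_abs.2 (Or.inr (by push_cast; omega))),
      schurCarry_eq_zero n _ (le_abs.2 (Or.inl (by push_cast; omega))), sub_zero] at tel
    have key : ∑ i ∈ Finset.range (2 * M), (schurTerm q (n + 2) ((i : ℤ) - M) -
        (schurTerm q (n + 1) ((i : ℤ) - M) + q ^ (n + 1) * schurTerm q n ((i : ℤ) - M))) = 0 := by
      rw [← tel]
      refine Finset.sum_congr rfl fun i _ => ?_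
      rw [schurTerm_rec hq, show (i : ℤ) - M + 1 = ((i + 1 : ℕ) : ℤ) - M by push_cast; ring]
    rw [Finset.sum_sub_distrib, Finset.sum_add_distrib, ← Finset.mul_sum, ← ih0 (by omega),
      ← ih1 (by omega), sub_eq_zero] at key
    rw [key]
    simp [qFibG]

end

theorem cyclotomic_dvd_qFibG_five_mul (m : ℕ) (hm : 0 < m) :
    Polynomial.cyclotomic (5 * m) ℤ ∣ qFibG (5 * m) := by
  have hN : 0 < 5 * m := by omega
  have hζ := Complex.isPrimitiveRoot_exp (5 * m) hN.ne'
  generalize Complex.exp (2 * Real.pi * Complex.I / ((5 * m : ℕ) : ℂ)) = ζ at hζ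
  rw [Polynomial.cyclotomic_eq_minpoly hζ hN]
  refine minpoly.isIntegrallyClosed_dvd (hζ.isIntegral hN) ?_
  have h0 : ζ ≠ 0 := hζ.ne_zero hN.ne'
  rw [aeval_qFibG_eq_sum h0 (5 * m) hN (5 * m) le_rfl]
  refine Finset.sum_eq_zero fun i _ => ?_
  rw [schurTerm, gaussBinom_eq_zero_of_root h0 _ hN hζ.pow_eq_one, mul_zero]
  rw [Ne, hζ.zpow_eq_one_iff_dvd]
  -- The lower index is `1` or `3` modulo `5`.
  intro hdvd
  have h5 : (5 : ℤ) ∣ ((5 * m : ℕ) : ℤ) := ⟨m, by push_cast; ring⟩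
  have := h5.trans hdvd
  push_cast at this
  omega
end

section
/- For every nonnegative integer m, G_{5m+4}(q) ≡ q^{4m+3} (mod Φ_{5m+4}(q)) in ℤ[q]; equivalently, the cyclotomic polynomial Φ_{5m+4}(q) divides G_{5m+4}(q) − q^{4m+3}. -/
open Polynomial

section Schur

variable {K : Type*} [Field K]

/-! ### Gaussian binomial coefficients -/

/-- The Gaussian binomial coefficient `[n, k]_q`, defined by the q-Pascal rule
`[n+1, k] = [n, k-1] + q^k [n, k]`. The lower index is an integer, so that the rule needs no
boundary cases; the value is `0` unless `0 ≤ k ≤ n`. -/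
def qBinom (q : K) : ℕ → ℤ → K
  | 0, k => if k = 0 then 1 else 0
  | n + 1, k => qBinom q n (k - 1) + q ^ k * qBinom q n k

lemma qBinom_succ (q : K) (n : ℕ) (k : ℤ) :
    qBinom q (n + 1) k = qBinom q n (k - 1) + q ^ k * qBinom q n k := rfl

lemma qBinom_of_neg (q : K) (n : ℕ) : ∀ k : ℤ, k < 0 → qBinom q n k = 0 := by
  induction n with
  | zero => intro k hk; simp [qBinom, hk.ne]
  | succ n ih => intro k hk; rw [qBinom_succ, ih _ (by omega), ih _ hk]; simp

lemma qBinom_of_gt (q : K) (n : ℕ) : ∀ k : ℤ, (n : ℤ) < k → qBinom q n k = 0 := by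
  induction n with
  | zero => intro k hk; simp at hk; simp [qBinom, hk.ne']
  | succ n ih =>
    intro k hk
    push_cast at hk
    rw [qBinom_succ, ih _ (by omega), ih _ (by omega)]; simp

lemma qBinom_zero_right (q : K) (n : ℕ) : qBinom q n 0 = 1 := by
  induction n with
  | zero => simp [qBinom]
  | succ n ih => rw [qBinom_succ, ih, qBinom_of_neg _ _ _ (by omega)]; simp

/-- The second q-Pascal rule. -/
lemma qBinom_succ' {q : K} (hq : q ≠ 0) (n : ℕ) : ∀ k : ℤ,
    qBinom q (n + 1) k = q ^ ((n : ℤ) + 1 - k) * qBinom q n (k - 1) + qBinom q n k := by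
  induction n with
  | zero =>
    intro k
    rw [qBinom_succ]
    by_cases h0 : k = 0
    · subst h0; simp [qBinom]
    by_cases h1 : k = 1
    · subst h1; simp [qBinom]
    simp [qBinom, h0, sub_eq_zero, h1]
  | succ n ih =>
    intro k
    have e1 : q ^ k * q ^ ((n : ℤ) + 1 - k) = q ^ (((n + 1 : ℕ) : ℤ) + 1 - k) * q ^ (k - 1) := by
      rw [← zpow_add₀ hq, ← zpow_add₀ hq]; congr 1; push_cast; ring
    have e2 : (n : ℤ) + 1 - (k - 1) = ((n + 1 : ℕ) : ℤ) + 1 - k := by push_cast; ring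
    have h1 := ih (k - 1)
    rw [e2] at h1
    linear_combination qBinom_succ q (n + 1) k + h1 + q ^ k * ih k
      - q ^ (((n + 1 : ℕ) : ℤ) + 1 - k) * qBinom_succ q n (k - 1) - qBinom_succ q n k
      + qBinom q n (k - 1) * e1

lemma one_sub_mul_qBinom {q : K} (hq : q ≠ 0) (n : ℕ) (k : ℤ) :
    (1 - q ^ k) * qBinom q (n + 1) k = (1 - q ^ (n + 1)) * qBinom q n (k - 1) := by
  have e : q ^ k * q ^ ((n : ℤ) + 1 - k) = q ^ (n + 1) := by
    rw [← zpow_add₀ hq, ← zpow_natCast]; congr 1; push_cast; ring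
  linear_combination qBinom_succ q n k - q ^ k * qBinom_succ' hq n k - qBinom q n (k - 1) * e

/-- At a primitive `n`-th root of unity only the outermost Gaussian binomials survive. -/
lemma qBinom_eq_zero {q : K} {n : ℕ} (hn : 0 < n) (hq : IsPrimitiveRoot q n) {k : ℤ}
    (h0 : k ≠ 0) (h1 : k ≠ n) : qBinom q n k = 0 := by
  rcases lt_or_ge k 0 with h | h
  · exact qBinom_of_neg _ _ _ h
  rcases lt_or_ge (n : ℤ) k with h' | h'
  · exact qBinom_of_gt _ _ _ h'
  obtain ⟨n, rfl⟩ : ∃ l, n = l + 1 := ⟨n - 1, by omega⟩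
  have key := one_sub_mul_qBinom (hq.ne_zero (by omega)) n k
  rw [hq.pow_eq_one, sub_self, zero_mul] at key
  refine (mul_eq_zero.1 key).resolve_left fun hk => ?_
  have hd := (hq.zpow_eq_one_iff_dvd k).1 (sub_eq_zero.1 hk).symm
  have := Int.le_of_dvd (by omega) hd
  omega

/-! ### Schur's identity -/

/-- The summands `j = 2i` and `j = 2i + 1` of Schur's identity for the index `2N`. -/
def evenTerm (q : K) (N : ℕ) (i : ℤ) : K :=
  q ^ (10 * i ^ 2 - 3 * i) * qBinom q (2 * N) (N + 1 - 5 * i)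
    - q ^ (10 * i ^ 2 + 7 * i + 1) * qBinom q (2 * N) (N - 2 - 5 * i)

/-- The summands `j = 2i` and `j = 2i + 1` of Schur's identity for the index `2N + 1`. -/
def oddTerm (q : K) (N : ℕ) (i : ℤ) : K :=
  q ^ (10 * i ^ 2 - 3 * i) * qBinom q (2 * N + 1) (N + 1 - 5 * i)
    - q ^ (10 * i ^ 2 + 7 * i + 1) * qBinom q (2 * N + 1) (N - 1 - 5 * i)

/-- The quantity that telescopes in `evenTerm_step`. -/
def telescoper (q : K) (N : ℕ) (i : ℤ) : K :=
  q ^ (10 * i ^ 2 - 8 * i + N + 2) * qBinom q (2 * N) (N + 2 - 5 * i)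

lemma evenTerm_step {q : K} (hq : q ≠ 0) (N : ℕ) (i : ℤ) :
    evenTerm q (N + 1) i = oddTerm q N i + q ^ (2 * N + 1) * evenTerm q N i
      + (telescoper q N i - telescoper q N (i + 1)) := by
  have p1 := qBinom_succ q (2 * N + 1) (N + 2 - 5 * i)
  have p2 := qBinom_succ' hq (2 * N + 1) (N - 1 - 5 * i)
  have p3 := qBinom_succ' hq (2 * N) (N + 2 - 5 * i)
  have p4 := qBinom_succ q (2 * N) (N - 2 - 5 * i)
  rw [show (N : ℤ) + 2 - 5 * i - 1 = N + 1 - 5 * i by ring] at p1 p3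
  rw [show (N : ℤ) - 1 - 5 * i - 1 = N - 2 - 5 * i by ring] at p2
  rw [show (N : ℤ) - 2 - 5 * i - 1 = N - 3 - 5 * i by ring] at p4
  rw [show ((2 * N + 1 : ℕ) : ℤ) + 1 - (N - 1 - 5 * i) = N + 3 + 5 * i by push_cast; ring] at p2
  rw [show ((2 * N : ℕ) : ℤ) + 1 - (N + 2 - 5 * i) = N - 1 + 5 * i by push_cast; ring] at p3
  have e1 : q ^ (10 * i ^ 2 - 3 * i) * q ^ ((N : ℤ) + 2 - 5 * i)
      = q ^ (10 * i ^ 2 - 8 * i + N + 2) := by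
    rw [← zpow_add₀ hq]; congr 1; ring
  have e2 : q ^ (10 * i ^ 2 - 8 * i + N + 2) * q ^ ((N : ℤ) - 1 + 5 * i)
      = q ^ (2 * N + 1) * q ^ (10 * i ^ 2 - 3 * i) := by
    rw [← zpow_natCast q (2 * N + 1), ← zpow_add₀ hq, ← zpow_add₀ hq]; congr 1; push_cast; ring
  have e3 : q ^ (10 * i ^ 2 + 7 * i + 1) * q ^ ((N : ℤ) + 3 + 5 * i)
      = q ^ (10 * i ^ 2 + 12 * i + N + 4) := by
    rw [← zpow_add₀ hq]; congr 1; ring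
  have e4 : q ^ (10 * i ^ 2 + 12 * i + N + 4) * q ^ ((N : ℤ) - 2 - 5 * i)
      = q ^ (2 * N + 1) * q ^ (10 * i ^ 2 + 7 * i + 1) := by
    rw [← zpow_natCast q (2 * N + 1), ← zpow_add₀ hq, ← zpow_add₀ hq]; congr 1; push_cast; ring
  unfold evenTerm oddTerm telescoper
  rw [show 2 * (N + 1) = 2 * N + 1 + 1 by ring,
    show ((N + 1 : ℕ) : ℤ) + 1 - 5 * i = N + 2 - 5 * i by push_cast; ring,
    show ((N + 1 : ℕ) : ℤ) - 2 - 5 * i = N - 1 - 5 * i by push_cast; ring,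
    show 10 * (i + 1) ^ 2 - 8 * (i + 1) + (N : ℤ) + 2 = 10 * i ^ 2 + 12 * i + N + 4 by ring,
    show (N : ℤ) + 2 - 5 * (i + 1) = N - 3 - 5 * i by ring]
  linear_combination q ^ (10 * i ^ 2 - 3 * i) * p1 - q ^ (10 * i ^ 2 + 7 * i + 1) * p2
    + qBinom q (2 * N + 1) (N + 2 - 5 * i) * e1 + q ^ (10 * i ^ 2 - 8 * i + N + 2) * p3
    + qBinom q (2 * N) (N + 1 - 5 * i) * e2
    - qBinom q (2 * N + 1) (N - 2 - 5 * i) * e3 - q ^ (10 * i ^ 2 + 12 * i + N + 4) * p4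
    - qBinom q (2 * N) (N - 2 - 5 * i) * e4

lemma oddTerm_step {q : K} (hq : q ≠ 0) (N : ℕ) (i : ℤ) :
    oddTerm q (N + 1) i = evenTerm q (N + 1) i + q ^ (2 * N + 2) * oddTerm q N i := by
  have p1 := qBinom_succ' hq (2 * N + 2) (N + 2 - 5 * i)
  have p2 := qBinom_succ q (2 * N + 2) (N - 5 * i)
  have p3 := qBinom_succ q (2 * N + 1) (N + 1 - 5 * i)
  have p4 := qBinom_succ' hq (2 * N + 1) (N - 5 * i)
  rw [show (N : ℤ) + 2 - 5 * i - 1 = N + 1 - 5 * i by ring,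
    show ((2 * N + 2 : ℕ) : ℤ) + 1 - (N + 2 - 5 * i) = N + 1 + 5 * i by push_cast; ring] at p1
  rw [show (N : ℤ) - 5 * i - 1 = N - 1 - 5 * i by ring] at p2 p4
  rw [show (N : ℤ) + 1 - 5 * i - 1 = N - 5 * i by ring] at p3
  rw [show ((2 * N + 1 : ℕ) : ℤ) + 1 - (N - 5 * i) = N + 2 + 5 * i by push_cast; ring] at p4
  have e1 : q ^ (10 * i ^ 2 - 3 * i) * q ^ ((N : ℤ) + 1 + 5 * i)
      = q ^ (10 * i ^ 2 + 2 * i + N + 1) := by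
    rw [← zpow_add₀ hq]; congr 1; ring
  have e2 : q ^ (10 * i ^ 2 + 2 * i + N + 1) * q ^ ((N : ℤ) + 1 - 5 * i)
      = q ^ (2 * N + 2) * q ^ (10 * i ^ 2 - 3 * i) := by
    rw [← zpow_natCast q (2 * N + 2), ← zpow_add₀ hq, ← zpow_add₀ hq]; congr 1; push_cast; ring
  have e3 : q ^ (10 * i ^ 2 + 7 * i + 1) * q ^ ((N : ℤ) - 5 * i)
      = q ^ (10 * i ^ 2 + 2 * i + N + 1) := by
    rw [← zpow_add₀ hq]; congr 1; ring
  have e4 : q ^ (10 * i ^ 2 + 2 * i + N + 1) * q ^ ((N : ℤ) + 2 + 5 * i)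
      = q ^ (2 * N + 2) * q ^ (10 * i ^ 2 + 7 * i + 1) := by
    rw [← zpow_natCast q (2 * N + 2), ← zpow_add₀ hq, ← zpow_add₀ hq]; congr 1; push_cast; ring
  unfold evenTerm oddTerm
  rw [show 2 * (N + 1) = 2 * N + 2 by ring,
    show ((N + 1 : ℕ) : ℤ) + 1 - 5 * i = N + 2 - 5 * i by push_cast; ring,
    show ((N + 1 : ℕ) : ℤ) - 1 - 5 * i = N - 5 * i by push_cast; ring,
    show ((N + 1 : ℕ) : ℤ) - 2 - 5 * i = N - 1 - 5 * i by push_cast; ring]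
  linear_combination q ^ (10 * i ^ 2 - 3 * i) * p1 - q ^ (10 * i ^ 2 + 7 * i + 1) * p2
    + qBinom q (2 * N + 2) (N + 1 - 5 * i) * e1 + q ^ (10 * i ^ 2 + 2 * i + N + 1) * p3
    + qBinom q (2 * N + 1) (N + 1 - 5 * i) * e2
    - qBinom q (2 * N + 2) (N - 5 * i) * e3 - q ^ (10 * i ^ 2 + 2 * i + N + 1) * p4
    - qBinom q (2 * N + 1) (N - 1 - 5 * i) * e4

/-- Schur's identity. The sum over `i ∈ ℤ` is truncated to the window `-M ≤ i < M`, which contains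
all nonzero summands as soon as `M ≥ max N 1`. -/
lemma qFibG_eq_sum {q : K} (hq : q ≠ 0) {M : ℕ} (hM : 0 < M) (N : ℕ) (hN : N ≤ M) :
    aeval q (qFibG (2 * N)) = ∑ j ∈ Finset.range (2 * M), evenTerm q N (j - M) ∧
    aeval q (qFibG (2 * N + 1)) = ∑ j ∈ Finset.range (2 * M), oddTerm q N (j - M) := by
  induction N with
  | zero =>
    constructor
    · rw [Finset.sum_eq_zero]
      · simp [qFibG]
      · intro j _
        have h1 : ((0 : ℕ) : ℤ) + 1 - 5 * ((j : ℤ) - M) ≠ 0 := by omega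
        have h2 : ((0 : ℕ) : ℤ) - 2 - 5 * ((j : ℤ) - M) ≠ 0 := by omega
        simp only [evenTerm, qBinom, if_neg h1, if_neg h2]
        simp
    · rw [Finset.sum_eq_single M]
      · simp [qFibG, oddTerm, qBinom]
      · intro j _ hj
        have h1 : ((0 : ℕ) : ℤ) + 1 - 5 * ((j : ℤ) - M) ≠ 0 := by omega
        have h2 : ((0 : ℕ) : ℤ) - 1 - 5 * ((j : ℤ) - M) ≠ 0 := by omega
        have h3 : ((0 : ℕ) : ℤ) + 1 - 5 * ((j : ℤ) - M) - 1 ≠ 0 := by omega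
        have h4 : ((0 : ℕ) : ℤ) - 1 - 5 * ((j : ℤ) - M) - 1 ≠ 0 := by omega
        simp only [oddTerm, qBinom, if_neg h1, if_neg h2, if_neg h3, if_neg h4]
        simp
      · intro h; exact absurd (Finset.mem_range.2 (by omega)) h
  | succ N ih =>
    obtain ⟨ihe, iho⟩ := ih (by omega)
    have tel : ∑ j ∈ Finset.range (2 * M),
        (telescoper q N ((j : ℤ) - M) - telescoper q N ((j : ℤ) - M + 1)) = 0 := by
      have h := Finset.sum_range_sub' (fun j : ℕ => telescoper q N ((j : ℤ) - M)) (2 * M)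
      have h0 : telescoper q N (((0 : ℕ) : ℤ) - M) = 0 := by
        rw [telescoper, qBinom_of_gt _ _ _ (by push_cast; omega), mul_zero]
      have h1 : telescoper q N (((2 * M : ℕ) : ℤ) - M) = 0 := by
        rw [telescoper, qBinom_of_neg _ _ _ (by push_cast; omega), mul_zero]
      rw [h0, h1, sub_zero] at h
      rw [← h]
      refine Finset.sum_congr rfl fun j _ => ?_
      rw [show (((j + 1 : ℕ) : ℤ)) - M = (j : ℤ) - M + 1 by push_cast; ring]
    have he : aeval q (qFibG (2 * (N + 1)))
        = ∑ j ∈ Finset.range (2 * M), evenTerm q (N + 1) (j - M) := by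
      simp_rw [evenTerm_step hq]
      rw [Finset.sum_add_distrib, tel, Finset.sum_add_distrib, ← Finset.mul_sum, ← ihe, ← iho,
        show 2 * (N + 1) = 2 * N + 2 by ring, qFibG]
      simp
    refine ⟨he, ?_⟩
    simp_rw [oddTerm_step hq]
    rw [Finset.sum_add_distrib, ← Finset.mul_sum, ← iho, ← he,
      show 2 * (N + 1) + 1 = 2 * N + 1 + 2 by ring, qFibG]
    simp [mul_add]

/-! ### Evaluation at a primitive root of unity -/

/-- At a primitive root of unity of order `n = 5m + 4`, Schur's sum has a single nonzero summand,
with Gaussian binomial `[n, 0] = 1`. -/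
lemma aeval_qFibG {q : K} (m : ℕ) (hq : IsPrimitiveRoot q (5 * m + 4)) :
    aeval q (qFibG (5 * m + 4)) = q ^ (4 * m + 3) := by
  have hq0 : q ≠ 0 := hq.ne_zero (by omega)
  rcases Nat.even_or_odd' m with ⟨t, rfl | rfl⟩
  · have hn : 5 * (2 * t) + 4 = 2 * (5 * t + 2) := by ring
    rw [hn] at hq ⊢
    rw [(qFibG_eq_sum hq0 (M := 5 * t + 2) (by omega) _ le_rfl).1,
      Finset.sum_eq_single (6 * t + 2)]
    · have hneg : q ^ (5 * t + 2) = -1 := by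
        have hp : IsPrimitiveRoot (q ^ (5 * t + 2)) 2 :=
          hq.pow (by omega) (by ring)
        exact hp.eq_neg_one_of_two_right
      have hexp : q ^ (10 * (t : ℤ) ^ 2 + 7 * t + 1) = -q ^ (4 * (2 * t) + 3) := by
        -- `10t² + 7t + 1 + 2(5t+2) = (2t+1)(5t+2) + (8t+3)`
        have h : q ^ (10 * t ^ 2 + 7 * t + 1) * (q ^ (5 * t + 2)) ^ 2
            = (q ^ (5 * t + 2)) ^ (2 * t + 1) * q ^ (4 * (2 * t) + 3) := by ring
        rw [hneg, pow_succ (-1 : K) (2 * t), pow_mul] at h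
        simp only [even_two, Even.neg_pow, one_pow, mul_one, one_mul] at h
        rw [neg_one_mul] at h
        rw [← h]
        exact_mod_cast zpow_natCast q (10 * t ^ 2 + 7 * t + 1)
      rw [evenTerm, show ((6 * t + 2 : ℕ) : ℤ) - (5 * t + 2 : ℕ) = t by push_cast; ring, hexp,
        qBinom_eq_zero (by omega) hq (by push_cast; omega) (by push_cast; omega),
        show ((5 * t + 2 : ℕ) : ℤ) - 2 - 5 * t = 0 by push_cast; ring, qBinom_zero_right]
      ring
    · intro j _ hj
      rw [evenTerm, qBinom_eq_zero (by omega) hq (by push_cast; omega) (by push_cast; omega),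
        qBinom_eq_zero (by omega) hq (by push_cast; omega) (by push_cast; omega)]
      simp
    · intro h; exact absurd (Finset.mem_range.2 (by omega)) h
  · have hn : 5 * (2 * t + 1) + 4 = 2 * (5 * t + 4) + 1 := by ring
    rw [hn] at hq ⊢
    rw [(qFibG_eq_sum hq0 (M := 5 * t + 4) (by omega) _ le_rfl).2,
      Finset.sum_eq_single (6 * t + 5)]
    · have hexp : q ^ (10 * ((t : ℤ) + 1) ^ 2 - 3 * (t + 1)) = q ^ (4 * (2 * t + 1) + 3) := by
        -- `10(t+1)² - 3(t+1) = t(10t+9) + (8t+7)`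
        have h : (q ^ (2 * (5 * t + 4) + 1)) ^ t * q ^ (4 * (2 * t + 1) + 3)
            = q ^ (10 * t ^ 2 + 17 * t + 7) := by ring
        rw [hq.pow_eq_one, one_pow, one_mul] at h
        rw [h, ← zpow_natCast]
        congr 1; push_cast; ring
      rw [oddTerm, show ((6 * t + 5 : ℕ) : ℤ) - (5 * t + 4 : ℕ) = t + 1 by push_cast; ring, hexp,
        show ((5 * t + 4 : ℕ) : ℤ) + 1 - 5 * (t + 1) = 0 by push_cast; ring, qBinom_zero_right,
        qBinom_eq_zero (by omega) hq (by push_cast; omega) (by push_cast; omega)]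
      ring
    · intro j _ hj
      rw [oddTerm, qBinom_eq_zero (by omega) hq (by push_cast; omega) (by push_cast; omega),
        qBinom_eq_zero (by omega) hq (by push_cast; omega) (by push_cast; omega)]
      simp
    · intro h; exact absurd (Finset.mem_range.2 (by omega)) h

end Schur

theorem qFibG_mod_cyclotomic_8 (m : ℕ) :
    Polynomial.cyclotomic (5 * m + 4) ℤ ∣ (qFibG (5 * m + 4) - X ^ (4 * m + 3)) := by
  have hζ := Complex.isPrimitiveRoot_exp (5 * m + 4) (by omega)
  rw [cyclotomic_eq_minpoly hζ (by omega)]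
  refine minpoly.isIntegrallyClosed_dvd (hζ.isIntegral (by omega)) ?_
  rw [map_sub, aeval_qFibG m hζ]
  simp
end

section
/- For every positive integer n, the matrix product A(q^{n-1}) A(q^{n-2}) ⋯ A(q) A(1) over the ring ℤ[q], where A(x) denotes the 2×2 matrix with rows (1, x) and (1, 0), equals the 2×2 matrix with rows (F_{n+1}(q), G_n(q)) and (F_n(q), G_{n-1}(q)). -/
open Polynomial Matrix

/-- The matrix A(x) = [[1, x], [1, 0]] over ℤ[q]. -/
noncomputable def qFibMat (x : Polynomial ℤ) : Matrix (Fin 2) (Fin 2) (Polynomial ℤ) :=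
  !![1, x; 1, 0]

/-- A(q^(n-1)) A(q^(n-2)) ⋯ A(q) A(1) = [[F_{n+1}, G_n], [F_n, G_{n-1}]]. -/
theorem qFibMat_prod (n : ℕ) (hn : 0 < n) :
    (((List.range n).reverse).map (fun i => qFibMat (X ^ i))).prod =
      !![qFibF (n + 1), qFibG n; qFibF n, qFibG (n - 1)] := by
  induction n, hn using Nat.le_induction with
  | base => simp [qFibMat, qFibF, qFibG]
  | succ n hn ih =>
    -- Left multiplication by `A(q^n)` applies both recurrences to the first row and moves the
    -- old first row down to the second.
    rw [List.range_succ, List.reverse_append, List.reverse_singleton, List.singleton_append,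
      List.map_cons, List.prod_cons, ih]
    obtain ⟨m, rfl⟩ : ∃ m, n = m + 1 := ⟨n - 1, by omega⟩
    simp [qFibMat, qFibF, qFibG]
end

section
/- q-Cassini formula: for every positive integer n, F_{n+1}(q) G_{n-1}(q) − F_n(q) G_n(q) = (−1)^n q^{n(n-1)/2} in ℤ[q]. -/
/-! The Cassini difference `C n = F (n + 1) * G (n - 1) - F n * G n` satisfies `C (n + 1) = -X ^ n * C n`:
expanding `F (n + 2)` and `G (n + 1)` by their recurrences, which carry the same coefficient `X ^ n`,
makes the products `F (n + 1) * G n` cancel. Since `C 1 = -1`, induction gives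
`(-1) ^ n * X ^ (0 + 1 + ⋯ + (n - 1))`. -/

open Polynomial

/-- q-Cassini formula: F_{n+1} G_{n-1} − F_n G_n = (−1)^n q^{n(n−1)/2}. -/
theorem qCassini (n : ℕ) (hn : 0 < n) :
    qFibF (n + 1) * qFibG (n - 1) - qFibF n * qFibG n =
      (-1 : Polynomial ℤ) ^ n * X ^ (n * (n - 1) / 2) := by
  obtain ⟨m, rfl⟩ : ∃ m, n = m + 1 := ⟨n - 1, by omega⟩
  clear hn
  induction m with
  | zero => simp [qFibF, qFibG]
  | succ m ih =>
    have hF : qFibF (m + 1 + 1 + 1) = qFibF (m + 1 + 1) + X ^ (m + 1) * qFibF (m + 1) := by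
      rw [qFibF]
    have hG : qFibG (m + 1 + 1) = qFibG (m + 1) + X ^ (m + 1) * qFibG m := by
      rw [qFibG]
    rw [Nat.triangle_succ, pow_add X, pow_succ (-1 : Polynomial ℤ) (m + 1), hF, hG]
    simp only [Nat.add_sub_cancel] at ih ⊢
    linear_combination (-X ^ (m + 1)) * ih
end

section
/- Let n be a positive integer and Φ_n(q) the n-th cyclotomic polynomial. If n ≡ 0 (mod 5) then Φ_n(q) divides F_n(q) · G_n(q) in ℤ[q], and if n ≢ 0 (mod 5) then F_n(q) · G_n(q) ≡ 1 (mod Φ_n(q)), i.e. Φ_n(q) divides F_n(q)·G_n(q) − 1. -/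
/-!
Write `A(y) = !![1, y; 1, 0]`. For a primitive `n`-th root of unity `ζ` the monodromy matrix
`P = A(ζ^(n-1)) ⋯ A(ζ) A(1)` has entries `F_{n+1}, G_n; F_n, G_{n-1}` evaluated at `ζ`.

* `det P = ∏ (-ζ^i) = -1`. Inserting a variable, `A(ζ^(n-1) x) ⋯ A(x)` has a trace that is a
  polynomial in `x` of degree `< n` invariant under `x ↦ ζ x` (cyclicity of the trace), so it is
  constant, and its value at `x = 0` is `1`. Hence `tr P = 1` and, with `a = F_{n+1}(ζ)`,
  `F_n(ζ) G_n(ζ) = a (1 - a) + 1`.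
* Over `ℂ` the matrix `P` is Hermitian (`A(y) = E · diag(1, y)` with `E` symmetric). So `a` is real
  and `a (1 - a) + 1 = |F_n(ζ)|² ≥ 0`, which puts `a (1 - a)` in `[-1, 1/4]`. This holds for every
  complex embedding, so by Kronecker's theorem the algebraic integer `a (1 - a)` is `0` or a root of
  unity, in which case it is `-1`. Therefore `F_n(ζ) G_n(ζ)` is `1` or `0`.
* If `5 ∣ n`, the value `1` is impossible: reducing at a prime over `5`, `ζ` becomes a primitive
  `m`-th root of unity with `n = 5 ^ k * m`, `k ≥ 1`, and the monodromy is `P_m ^ (5 ^ k)`. As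
  `P_m ^ 2 = P_m + 1`, `P_m ^ 5 = 5 P_m + 3 = 3` is scalar, so `F_n(ζ)` reduces to `0`.
* If `5 ∤ n`, the value `0` is impossible: it would give `(2 a - 1) ^ 2 = 5`, whereas `Φ_n` is
  squarefree modulo `5`, so that `5 ∣ 2 a - 1` in `ℤ[ζ]` and `25 ∣ 5`.
-/

open Polynomial

namespace QFib

open Matrix

/-! ### Products of transfer matrices -/

/-- The one-step transfer matrix `(u, v) ↦ (u + y v, u)` of the recurrences. -/
def stepMat {R : Type*} [CommRing R] (y : R) : Matrix (Fin 2) (Fin 2) R := !![1, y; 1, 0]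

/-- The product `A(w (n-1)) ⋯ A(w 1) A(w 0)` of transfer matrices. -/
def transfer {R : Type*} [CommRing R] (w : ℕ → R) : ℕ → Matrix (Fin 2) (Fin 2) R
  | 0 => 1
  | n + 1 => stepMat (w n) * transfer w n

section General

variable {R : Type*} [CommRing R]

lemma transfer_congr {v w : ℕ → R} {n : ℕ} (h : ∀ i < n, v i = w i) :
    transfer v n = transfer w n := by
  induction n with
  | zero => rfl
  | succ n ih =>
    rw [transfer, transfer, h n (by lia), ih fun i hi => h i (by lia)]

lemma transfer_add (w : ℕ → R) (a b : ℕ) :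
    transfer w (a + b) = transfer (fun i => w (a + i)) b * transfer w a := by
  induction b with
  | zero => simp [transfer]
  | succ b ih => rw [← add_assoc, transfer, ih, transfer, Matrix.mul_assoc]

lemma transfer_succ' (w : ℕ → R) (n : ℕ) :
    transfer w (n + 1) = transfer (fun i => w (i + 1)) n * stepMat (w 0) := by
  have h := transfer_add w 1 n
  rw [add_comm] at h
  rw [h]
  congr 1
  · simp only [add_comm]
  · simp [transfer]

lemma map_transfer {S : Type*} [CommRing S] (f : R →+* S) (w : ℕ → R) (n : ℕ) :
    (transfer w n).map f = transfer (fun i => f (w i)) n := by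
  induction n with
  | zero => simp [transfer]
  | succ n ih =>
    rw [transfer, transfer, Matrix.map_mul, ih]
    congr 1
    ext i j; fin_cases i <;> fin_cases j <;> simp [stepMat]

lemma det_transfer (w : ℕ → R) (n : ℕ) :
    (transfer w n).det = ∏ i ∈ Finset.range n, (-w i) := by
  induction n with
  | zero => simp [transfer]
  | succ n ih =>
    rw [transfer, det_mul, ih, Finset.prod_range_succ, mul_comm]
    simp [stepMat, det_fin_two]

/-- Reversal symmetry: writing `A(y) = E · diag(1, y)` with `E = A(1)` symmetric, transposition
reverses the order of the weights. -/
lemma transpose_transfer_mul (w : ℕ → R) (n : ℕ) :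
    (transfer w n * stepMat 1)ᵀ = transfer (fun i => w (n - 1 - i)) n * stepMat 1 := by
  induction n with
  | zero =>
    ext i j; fin_cases i <;> fin_cases j <;> simp [stepMat, transfer]
  | succ n ih =>
    have hE : (stepMat (w n))ᵀ = !![1, 0; 0, w n] * stepMat 1 := by
      ext i j; fin_cases i <;> fin_cases j <;> simp [stepMat]
    have hD : stepMat (1 : R) * !![1, 0; 0, w n] = stepMat (w n) := by
      ext i j; fin_cases i <;> fin_cases j <;> simp [stepMat]
    rw [transfer, Matrix.mul_assoc, transpose_mul, ih, hE, transfer_succ',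
      Matrix.mul_assoc, ← Matrix.mul_assoc (stepMat 1), hD, Matrix.mul_assoc]
    congr 2
    funext i
    congr 1
    lia

/-- The monodromy of the geometric weights consists of values of the q-Fibonacci polynomials. -/
lemma transfer_pow (x : R) (n : ℕ) :
    transfer (fun i => x ^ i) (n + 1) =
      !![aeval x (qFibF (n + 2)), aeval x (qFibG (n + 1));
         aeval x (qFibF (n + 1)), aeval x (qFibG n)] := by
  induction n with
  | zero =>
    ext i j; fin_cases i <;> fin_cases j <;> simp [transfer, stepMat, qFibF, qFibG]
  | succ n ih =>
    rw [transfer, ih, qFibF.eq_def (n + 1 + 2), qFibG.eq_def (n + 1 + 1)]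
    ext i j; fin_cases i <;> fin_cases j <;> simp [stepMat]

end General

/-! ### The monodromy at a root of unity: trace, determinant, characteristic five -/

section Root

variable {R : Type*} [CommRing R]

/-- Degree bound for linear weights: only every other factor can contribute a variable. -/
lemma natDegree_transfer (c : ℕ → R) (n : ℕ) (j : Fin 2) :
    2 * (transfer (fun i => C (c i) * X) n 0 j).natDegree ≤ n + 1 ∧
      2 * (transfer (fun i => C (c i) * X) n 1 j).natDegree ≤ n := by
  induction n with
  | zero => fin_cases j <;> simp [transfer, Matrix.one_apply]
  | succ n ih =>
    obtain ⟨h0, h1⟩ := ih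
    have e0 : transfer (fun i => C (c i) * X) (n + 1) 0 j =
        transfer (fun i => C (c i) * X) n 0 j
          + C (c n) * X * transfer (fun i => C (c i) * X) n 1 j := by
      simp [transfer, stepMat, Matrix.mul_apply]
    have e1 : transfer (fun i => C (c i) * X) (n + 1) 1 j =
        transfer (fun i => C (c i) * X) n 0 j := by
      simp [transfer, stepMat, Matrix.mul_apply]
    rw [e0, e1]
    refine ⟨?_, h0⟩
    have a1 := natDegree_add_le (transfer (fun i => C (c i) * X) n 0 j)
      (C (c n) * X * transfer (fun i => C (c i) * X) n 1 j)
    have a2 := natDegree_mul_le (p := C (c n) * X) (q := transfer (fun i => C (c i) * X) n 1 j)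
    have a3 : (C (c n) * X).natDegree ≤ 1 := by simpa using natDegree_C_mul_X_pow_le (c n) 1
    rcases le_max_iff.1 a1 with h | h <;> lia

lemma transfer_zero_trace (n : ℕ) : (transfer (fun _ => (0 : R)) (n + 1)).trace = 1 := by
  have h : transfer (fun _ => (0 : R)) (n + 1) = stepMat 0 := by
    induction n with
    | zero => simp [transfer]
    | succ n ih =>
      rw [transfer, ih]
      ext i j; fin_cases i <;> fin_cases j <;> simp [stepMat]
  rw [h]
  simp [stepMat, trace_fin_two]

lemma transfer_periodic_mul (x : R) (m r : ℕ) (hx : x ^ m = 1) :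
    transfer (fun i => x ^ i) (m * r) = transfer (fun i => x ^ i) m ^ r := by
  induction r with
  | zero => simp [transfer]
  | succ r ih =>
    rw [Nat.mul_succ, transfer_add, ih, pow_succ']
    simp only [pow_add, pow_mul, hx, one_pow, one_mul]

variable [IsDomain R] {ζ : R} {n : ℕ}

lemma det_transfer_root (hn : 0 < n) (hζ : IsPrimitiveRoot ζ n) :
    (transfer (fun i => ζ ^ i) n).det = -1 := by
  have h := congrArg (eval 0) (X_pow_sub_C_eq_prod hζ hn (one_pow (M := R) n))
  rw [det_transfer]
  simp only [eval_sub, eval_pow, eval_X, eval_C, eval_prod, mul_one, zero_sub,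
    zero_pow hn.ne'] at h
  exact h.symm

/-- The trace of the monodromy is `1`: with an extra variable `x` in the weights it is a polynomial
of degree `< n`, invariant under `x ↦ ζ x`, hence constant. -/
lemma trace_transfer_root (hn : 0 < n) (hζ : IsPrimitiveRoot ζ n) :
    (transfer (fun i => ζ ^ i) n).trace = 1 := by
  obtain ⟨m, rfl⟩ : ∃ m, n = m + 1 := ⟨n - 1, by lia⟩
  set w : ℕ → R[X] := fun i => C (ζ ^ i) * X with hw
  set t := (transfer w (m + 1)).trace with ht
  have hev (x : R) : t.eval x = (transfer (fun i => ζ ^ i * x) (m + 1)).trace := by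
    have h := map_transfer (evalRingHom x) w (m + 1)
    simp only [hw, coe_evalRingHom, eval_mul, eval_C, eval_X] at h
    rw [← h, ht, trace_fin_two, trace_fin_two]
    simp [hw]
  have hinv : t.comp (C ζ * X) = t := by
    have h := map_transfer (compRingHom (C ζ * X)) w (m + 1)
    have hfun : (fun i => compRingHom (C ζ * X) (w i)) = fun i => w (i + 1) := by
      funext i
      simp [hw, pow_succ, mul_assoc]
    rw [hfun] at h
    have h1 : t.comp (C ζ * X) = (transfer (fun i => w (i + 1)) (m + 1)).trace := by
      rw [← h, ht, trace_fin_two, trace_fin_two]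
      simp
    have hper : w (m + 1) = w 0 := by simp [hw, hζ.pow_eq_one, -map_pow]
    rw [h1, ht, transfer_succ' w, transfer, hper, trace_mul_comm]
  have hdeg : t.natDegree < m + 1 := by
    rcases Nat.eq_zero_or_pos m with rfl | hm
    · have : t = 1 := by simp [ht, transfer, stepMat, trace_fin_two]
      simp [this]
    · have a0 := (natDegree_transfer (fun i => ζ ^ i) (m + 1) 0).1
      have a1 := (natDegree_transfer (fun i => ζ ^ i) (m + 1) 1).2
      have a2 := natDegree_add_le (transfer w (m + 1) 0 0) (transfer w (m + 1) 1 1)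
      rw [ht, trace_fin_two]
      rcases le_max_iff.1 a2 with h | h <;> lia
  have hconst : t = C (t.coeff 0) := by
    ext k
    rw [coeff_C]
    split_ifs with hk
    · rw [hk]
    · by_cases hlt : k < m + 1
      · have h := congrArg (fun p => coeff p k) hinv
        simp only [comp_C_mul_X_coeff] at h
        have hne := hζ.pow_ne_one_of_pos_of_lt hk hlt
        have h2 : t.coeff k * (ζ ^ k - 1) = 0 := by linear_combination h
        exact (mul_eq_zero.1 h2).resolve_right (sub_ne_zero.2 hne)
      · exact coeff_eq_zero_of_natDegree_lt (by lia)
  have e1 := hev 1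
  have e0 := hev 0
  simp only [mul_one, mul_zero] at e1 e0
  rw [transfer_zero_trace] at e0
  rw [← e1, ← e0, hconst]
  simp

/-- Trace and determinant combined: the product `F_n G_n` at `ζ` in terms of `a = F_{n+1}(ζ)`. -/
lemma aeval_F_mul_G (hn : 0 < n) (hζ : IsPrimitiveRoot ζ n) :
    aeval ζ (qFibF n) * aeval ζ (qFibG n) =
      aeval ζ (qFibF (n + 1)) * (1 - aeval ζ (qFibF (n + 1))) + 1 := by
  have hd := det_transfer_root hn hζ
  have ht := trace_transfer_root hn hζ
  obtain ⟨m, rfl⟩ : ∃ m, n = m + 1 := ⟨n - 1, by lia⟩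
  rw [transfer_pow] at hd ht
  simp only [det_fin_two_of, trace_fin_two_of] at hd ht
  linear_combination -hd + aeval ζ (qFibF (m + 2)) * ht

/-- In characteristic `5`, `P ^ 2 = P + 1` makes `P ^ 5` scalar. -/
lemma aeval_F_eq_zero [CharP R 5] (hn : 0 < n) (hζ : IsPrimitiveRoot ζ n) (k : ℕ) :
    aeval ζ (qFibF (n * (5 ^ (k + 1)))) = 0 := by
  set P := transfer (fun i => ζ ^ i) n with hP
  have h5 : (5 : R) = 0 := by exact_mod_cast CharP.cast_eq_zero R 5
  have hd : P.det = -1 := det_transfer_root hn hζ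
  have ht : P.trace = 1 := trace_transfer_root hn hζ
  have hsq : P ^ 2 = P + 1 := by
    rw [det_fin_two] at hd
    rw [trace_fin_two] at ht
    rw [sq]
    ext i j
    fin_cases i <;> fin_cases j <;> simp [Matrix.mul_apply]
    · linear_combination P 0 0 * ht - hd
    · linear_combination P 0 1 * ht
    · linear_combination P 1 0 * ht
    · linear_combination P 1 1 * ht - hd
  have hp5 : P ^ 5 = Matrix.scalar (Fin 2) (3 : R) := by
    have h : P ^ 5 = (5 : R) • P + Matrix.scalar (Fin 2) (3 : R) := by
      have e : P ^ 5 = P ^ 2 * P ^ 2 * P := by noncomm_ring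
      have e2 : (P + 1) * (P + 1) * P = P ^ 2 * P + P ^ 2 + P ^ 2 + P := by noncomm_ring
      have e3 : (P + 1) * P = P ^ 2 + P := by noncomm_ring
      rw [e, hsq, e2, hsq, e3, hsq]
      ext i j
      fin_cases i <;> fin_cases j <;> simp <;> ring
    rw [h, h5, zero_smul, zero_add]
  have hmat : transfer (fun i => ζ ^ i) (n * 5 ^ (k + 1)) =
      Matrix.scalar (Fin 2) ((3 : R) ^ (5 ^ k)) := by
    rw [transfer_periodic_mul ζ n _ hζ.pow_eq_one, ← hP, pow_succ', pow_mul, hp5, ← map_pow]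
  obtain ⟨N, hN⟩ : ∃ N, n * 5 ^ (k + 1) = N + 1 := ⟨n * 5 ^ (k + 1) - 1, by
    have : 0 < n * 5 ^ (k + 1) := by positivity
    lia⟩
  rw [hN, transfer_pow] at hmat
  rw [hN]
  simpa using congrFun (congrFun hmat 1) 0

end Root

/-! ### Hermitian symmetry and Kronecker's theorem -/

/-- Over `ℂ` the monodromy matrix at a root of unity is Hermitian. -/
lemma conjTranspose_transfer {ζ : ℂ} {n : ℕ} (hn : 0 < n) (hζ : ζ ^ n = 1) :
    (transfer (fun i => ζ ^ i) n)ᵀ =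
      (transfer (fun i => ζ ^ i) n).map (starRingEnd ℂ) := by
  obtain ⟨m, rfl⟩ : ∃ m, n = m + 1 := ⟨n - 1, by lia⟩
  have hc : ζ * starRingEnd ℂ ζ = 1 := by
    rw [Complex.mul_conj, Complex.normSq_eq_norm_sq,
      Complex.norm_eq_one_of_pow_eq_one hζ (by lia)]
    simp
  rw [map_transfer, transfer_succ', transfer_succ']
  simp only [pow_zero, map_one]
  rw [transpose_transfer_mul]
  congr 1
  refine transfer_congr fun i hi => ?_
  rw [map_pow]
  have h1 : ζ ^ (m - 1 - i + 1) * ζ ^ (i + 1) = 1 := by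
    rw [← pow_add, ← hζ]; congr 1; lia
  have h2 : ζ ^ (i + 1) * (starRingEnd ℂ ζ) ^ (i + 1) = 1 := by
    rw [← mul_pow, hc, one_pow]
  linear_combination (-ζ ^ (m - 1 - i + 1)) * h2 + (starRingEnd ℂ ζ) ^ (i + 1) * h1

/-- The localization of `a (1 - a)` for `a = F_{n+1}(ζ)`: the lower bound is `|F_n(ζ)|² ≥ 0`. -/
lemma exists_real {ζ : ℂ} {n : ℕ} (hn : 0 < n) (hζ : IsPrimitiveRoot ζ n) :
    ∃ y : ℝ, aeval ζ (qFibF (n + 1)) * (1 - aeval ζ (qFibF (n + 1))) = (y : ℂ) ∧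
      -1 ≤ y ∧ y ≤ 1 / 4 := by
  have hH := conjTranspose_transfer hn hζ.pow_eq_one
  have hFG := aeval_F_mul_G hn hζ
  obtain ⟨m, rfl⟩ : ∃ m, n = m + 1 := ⟨n - 1, by lia⟩
  rw [transfer_pow] at hH
  have h00 := congrFun (congrFun hH 0) 0
  have h10 := congrFun (congrFun hH 0) 1
  simp only [transpose_apply, map_apply, of_apply, cons_val', cons_val_zero, cons_val_one,
    cons_val_fin_one] at h00 h10
  obtain ⟨a, ha⟩ := Complex.conj_eq_iff_real.1 h00.symm
  refine ⟨a * (1 - a), ?_, ?_, ?_⟩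
  · rw [ha]; push_cast; ring
  · rw [ha, h10, mul_comm, Complex.mul_conj] at hFG
    have h : Complex.normSq (aeval ζ (qFibG (m + 1))) = a * (1 - a) + 1 := by
      exact_mod_cast hFG
    linarith [Complex.normSq_nonneg (aeval ζ (qFibG (m + 1)))]
  · nlinarith [sq_nonneg (2 * a - 1)]

/-- The dichotomy, by Kronecker's theorem: a nonzero algebraic integer all of whose conjugates lie
in `[-1, 1/4]` is a root of unity, hence equal to `-1`. -/
lemma dvd_or_dvd {n : ℕ} (hn : 0 < n) :
    cyclotomic n ℤ ∣ qFibF n * qFibG n ∨ cyclotomic n ℤ ∣ qFibF n * qFibG n - 1 := by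
  have : NeZero n := ⟨hn.ne'⟩
  obtain ⟨K, _, _, ζ, hζ⟩ :
      ∃ (K : Type) (_ : Field K) (_ : NumberField K) (ζ : K), IsPrimitiveRoot ζ n :=
    have hK := CyclotomicField.isCyclotomicExtension n ℚ
    ⟨CyclotomicField n ℚ, inferInstance, inferInstance,
      _, @IsCyclotomicExtension.zeta_spec n _ ℚ _ _ _ _ hK⟩
  have hint : IsIntegral ℤ ζ := hζ.isIntegral hn
  have hdvd (p : ℤ[X]) (hp : aeval ζ p = 0) : cyclotomic n ℤ ∣ p := by
    rw [cyclotomic_eq_minpoly hζ hn]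
    exact minpoly.isIntegrallyClosed_dvd hint hp
  set B : ℤ[X] := qFibF (n + 1) * (1 - qFibF (n + 1)) with hB
  have hFG : aeval ζ (qFibF n * qFibG n) = aeval ζ B + 1 := by
    rw [map_mul, aeval_F_mul_G hn hζ, hB, map_mul, map_sub, map_one]
  have hreal (φ : K →+* ℂ) : ∃ y : ℝ, φ (aeval ζ B) = y ∧ -1 ≤ y ∧ y ≤ 1 / 4 := by
    obtain ⟨y, hy, h⟩ := exists_real hn (hζ.map_of_injective φ.injective)
    refine ⟨y, ?_, h⟩
    have e : φ (aeval ζ B) = aeval (φ ζ) B := by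
      rw [aeval_def, aeval_def, hom_eval₂]
      congr 1
      exact RingHom.ext_int _ _
    rw [e, ← hy, hB, map_mul, map_sub, map_one]
  by_cases h0 : aeval ζ B = 0
  · right
    apply hdvd
    rw [map_sub, hFG, h0]
    simp
  · left
    apply hdvd
    obtain ⟨k, hk, hpow⟩ := NumberField.Embeddings.pow_eq_one_of_norm_le_one K ℂ h0
      (adjoin_le_integralClosure hint (aeval_mem_adjoin_singleton ℤ ζ)) (by
        intro φ
        obtain ⟨y, hy, h1, h2⟩ := hreal φ
        rw [hy, Complex.norm_real, Real.norm_eq_abs, abs_le]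
        constructor <;> linarith)
    obtain ⟨φ⟩ : Nonempty (K →+* ℂ) := inferInstance
    obtain ⟨y, hy, h1, h2⟩ := hreal φ
    have hn1 : ‖φ (aeval ζ B)‖ = 1 :=
      Complex.norm_eq_one_of_pow_eq_one (by rw [← map_pow, hpow, map_one]) hk.ne'
    rw [hy, Complex.norm_real, Real.norm_eq_abs] at hn1
    have hy1 : y = -1 := by
      rcases eq_or_eq_neg_of_abs_eq hn1 with h | h <;> linarith
    apply φ.injective
    rw [hFG, map_add, hy, hy1]
    simp

/-! ### Reduction modulo five -/

/-- For `5 ∣ n` the product vanishes at a root of `Φ_n` in characteristic `5`. -/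
lemma not_dvd_sub_one {n : ℕ} (hn : 0 < n) (h5 : 5 ∣ n) :
    ¬ cyclotomic n ℤ ∣ qFibF n * qFibG n - 1 := by
  intro hdvd
  have : Fact (Nat.Prime 5) := ⟨by norm_num⟩
  obtain ⟨k, m, hm, rfl⟩ := Nat.exists_eq_pow_mul_and_not_dvd hn.ne' 5 (by norm_num)
  obtain ⟨k, rfl⟩ : ∃ j, k = j + 1 := by
    rcases k with _ | k
    · simp at h5; exact absurd h5 hm
    · exact ⟨k, rfl⟩
  obtain ⟨L, _, _, _⟩ : ∃ (L : Type) (_ : Field L) (_ : IsAlgClosed L), CharP L 5 :=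
    ⟨AlgebraicClosure (ZMod 5), inferInstance, inferInstance,
      charP_of_injective_algebraMap
        (algebraMap (ZMod 5) (AlgebraicClosure (ZMod 5))).injective 5⟩
  have hm0 : 0 < m := Nat.pos_of_ne_zero fun h => hm (h ▸ dvd_zero 5)
  have : NeZero (m : L) := ⟨fun h => hm ((CharP.cast_eq_zero_iff L 5 m).1 h)⟩
  obtain ⟨x, hx⟩ := IsAlgClosed.exists_root (cyclotomic (5 ^ (k + 1) * m) L)
    (degree_cyclotomic_pos _ L hn).ne'
  have hprim : IsPrimitiveRoot x m := isRoot_cyclotomic_prime_pow_mul_iff_of_charP.1 hx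
  have hF := aeval_F_eq_zero hm0 hprim k
  rw [mul_comm] at hF
  obtain ⟨q, hq⟩ := hdvd
  have h := congrArg (aeval x) hq
  have hx' : aeval x (cyclotomic (5 ^ (k + 1) * m) ℤ) = 0 := by
    rw [aeval_def, eval₂_eq_eval_map, map_cyclotomic]
    exact hx
  rw [map_sub, map_mul, map_mul, hF, hx', map_one] at h
  simp at h

/-- For `5 ∤ n` there is no square root of `5` in `ℤ[ζ]`, as `Φ_n` is squarefree modulo `5`. -/
lemma not_dvd_sq_sub_five {n : ℕ} (hn : 0 < n) (h5 : ¬ 5 ∣ n) (D : ℤ[X]) :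
    ¬ cyclotomic n ℤ ∣ D ^ 2 - 5 := by
  intro hdvd
  have : Fact (Nat.Prime 5) := ⟨by norm_num⟩
  let f := Int.castRingHom (ZMod 5)
  have h50 : (5 : (ZMod 5)[X]) = 0 := by exact_mod_cast CharP.cast_eq_zero (ZMod 5)[X] 5
  have hsf : Squarefree (cyclotomic n (ZMod 5)) := by
    have hsep : (X ^ n - C (1 : ZMod 5)).Separable :=
      separable_X_pow_sub_C 1 (fun h => h5 ((CharP.cast_eq_zero_iff (ZMod 5) 5 n).1 h)) one_ne_zero
    rw [C_1] at hsep
    exact hsep.squarefree.squarefree_of_dvd (cyclotomic.dvd_X_pow_sub_one n _)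
  have hmod : cyclotomic n (ZMod 5) ∣ D.map f := by
    have h := Polynomial.map_dvd f hdvd
    rw [map_cyclotomic, Polynomial.map_sub, Polynomial.map_pow, Polynomial.map_ofNat, h50,
      sub_zero] at h
    exact (hsf.dvd_pow_iff_dvd two_ne_zero).1 h
  -- Lift the quotient to `ℤ[X]`: `D = Φ_n B + 5 E`.
  obtain ⟨b, hb⟩ := hmod
  obtain ⟨B, rfl⟩ := Polynomial.map_surjective f (ZMod.ringHom_surjective f) b
  obtain ⟨E, hE⟩ : C (5 : ℤ) ∣ D - cyclotomic n ℤ * B := by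
    rw [C_dvd_iff_dvd_coeff]
    intro i
    have h : (D - cyclotomic n ℤ * B).map f = 0 := by
      rw [Polynomial.map_sub, Polynomial.map_mul, map_cyclotomic, hb, sub_self]
    have h2 := congrArg (fun p => coeff p i) h
    simp only [coeff_map, coeff_zero] at h2
    exact (ZMod.intCast_zmod_eq_zero_iff_dvd _ 5).1 h2
  have hC : C (5 : ℤ) = 5 := by simp
  rw [hC] at hE
  have hdvd2 : cyclotomic n ℤ ∣ 5 * (5 * E ^ 2 - 1) := by
    have e : 5 * (5 * E ^ 2 - 1) = (D ^ 2 - 5) - cyclotomic n ℤ * (B * (D + 5 * E)) := by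
      linear_combination (-(D + 5 * E)) * hE
    rw [e]
    exact dvd_sub hdvd (dvd_mul_right _ _)
  have hpr : Prime (cyclotomic n ℤ) := (cyclotomic.irreducible hn).prime
  have hpos := natDegree_cyclotomic n ℤ ▸ Nat.totient_pos.2 hn
  rcases hpr.dvd_or_dvd hdvd2 with h | h
  · have := natDegree_le_of_dvd h (by norm_num)
    rw [← hC, natDegree_C] at this
    lia
  · have h := Polynomial.map_dvd f h
    rw [map_cyclotomic, Polynomial.map_sub, Polynomial.map_mul, Polynomial.map_ofNat, h50,
      zero_mul, zero_sub, Polynomial.map_one, dvd_neg] at h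
    have := natDegree_eq_zero_of_isUnit (isUnit_of_dvd_one h)
    rw [natDegree_cyclotomic] at this
    exact (Nat.totient_pos.2 hn).ne' this

/-- The identity `F_n G_n = a (1 - a) + 1` of `aeval_F_mul_G` as a congruence modulo `Φ_n`. -/
lemma dvd_F_mul_G_sub {n : ℕ} (hn : 0 < n) :
    cyclotomic n ℤ ∣ qFibF n * qFibG n - (qFibF (n + 1) * (1 - qFibF (n + 1)) + 1) := by
  have hζ := Complex.isPrimitiveRoot_exp n hn.ne'
  rw [cyclotomic_eq_minpoly hζ hn]
  refine minpoly.isIntegrallyClosed_dvd (hζ.isIntegral hn) ?_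
  rw [map_sub, map_mul, aeval_F_mul_G hn hζ]
  simp

end QFib

theorem cyclotomic_dvd_qFibF_mul_qFibG (n : ℕ) (hn : 0 < n) :
    (5 ∣ n → Polynomial.cyclotomic n ℤ ∣ qFibF n * qFibG n) ∧
      (¬ 5 ∣ n → Polynomial.cyclotomic n ℤ ∣ (qFibF n * qFibG n - 1)) := by
  refine ⟨fun h5 => (QFib.dvd_or_dvd hn).resolve_right (QFib.not_dvd_sub_one hn h5),
    fun h5 => (QFib.dvd_or_dvd hn).resolve_left fun h => ?_⟩
  refine QFib.not_dvd_sq_sub_five hn h5 (2 * qFibF (n + 1) - 1) ?_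
  -- `(2a - 1)² - 5 = -4 (a (1 - a) + 1)`
  have e : (2 * qFibF (n + 1) - 1) ^ 2 - 5 =
      4 * ((qFibF n * qFibG n - (qFibF (n + 1) * (1 - qFibF (n + 1)) + 1)) -
        qFibF n * qFibG n) := by ring
  rw [e]
  exact Dvd.dvd.mul_left (dvd_sub (QFib.dvd_F_mul_G_sub hn) h) 4
end

section
/- Let k and n be positive integers and let ζ ∈ ℂ be a primitive k-th root of unity. Then F_{kn}(ζ) = F_n · F_k(ζ), where F_n denotes the n-th ordinary Fibonacci number and F_m(q) the q-Fibonacci polynomial evaluated at ζ. -/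
/-!
The vector `(F_{m+1}(ζ), F_m(ζ))` is the image of `(1, 0)` under a product of transfer matrices
`!![1, ζ ^ j; 1, 0]`, `j < m`. These are periodic in `j` with period `k`, so the product over `k * n`
steps is `A ^ n`, where `A` is the product over one period. It suffices that `det A = -1` and
`trace A = 1`: Cayley–Hamilton then gives `A ^ 2 = A + 1`, hence `A ^ n = F_n A + F_{n-1}`
(`pow_succ_eq_fib`), and the lower left entry is the claim.

The determinant is `∏ j < k, (-ζ ^ j)`, the constant term of `X ^ k - 1`. For the trace, put a weight
`x` on each term `ζ ^ j`. The trace becomes a polynomial `T(x)`, and replacing `x` by `ζ x` only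
rotates the factors cyclically, so `T(ζ x) = T(x)`. Hence only powers of `x ^ k` occur in `T`. For
`k ≥ 2` its degree is less than `k`, so `T(1) = T(0) = 1`; the case `k = 1` is immediate.
-/

open Polynomial

section Transfer

variable {R S : Type*} [CommRing R] [CommRing S]

/-- The transfer matrix of the recurrence `u (j + 2) = u (j + 1) + x * z ^ j * u j`. The extra
weight `x` marks each use of the second term. -/
def stepMat (z x : R) (j : ℕ) : Matrix (Fin 2) (Fin 2) R := !![1, x * z ^ j; 1, 0]

/-- The product `stepMat z x (m - 1) * ⋯ * stepMat z x 0`, which sends `(u 1, u 0)` to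
`(u (m + 1), u m)`. -/
def prodMat (z x : R) : ℕ → Matrix (Fin 2) (Fin 2) R
  | 0 => 1
  | m + 1 => stepMat z x m * prodMat z x m

lemma prodMat_succ_zero (z x : R) (m : ℕ) (j : Fin 2) :
    prodMat z x (m + 1) 0 j = prodMat z x m 0 j + x * z ^ m * prodMat z x m 1 j := by
  simp [prodMat, stepMat, Matrix.mul_apply, Fin.sum_univ_two]

lemma prodMat_succ_one (z x : R) (m : ℕ) (j : Fin 2) :
    prodMat z x (m + 1) 1 j = prodMat z x m 0 j := by
  simp [prodMat, stepMat, Matrix.mul_apply, Fin.sum_univ_two]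

lemma map_prodMat (f : R →+* S) (z x : R) (m : ℕ) (i j : Fin 2) :
    f (prodMat z x m i j) = prodMat (f z) (f x) m i j := by
  induction m generalizing i j with
  | zero => fin_cases i <;> fin_cases j <;> simp [prodMat]
  | succ m ih =>
    fin_cases i
    · simp [prodMat_succ_zero, ih]
    · simp [prodMat_succ_one, ih]

/-- Rescaling `x` by `z` shifts the index of every factor by one. -/
lemma stepMat_shift (z x : R) (j : ℕ) : stepMat z (z * x) j = stepMat z x (j + 1) := by
  simp only [stepMat, pow_succ]
  congr! 4
  ring_nf

lemma prodMat_succ' (z x : R) (m : ℕ) :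
    prodMat z x (m + 1) = prodMat z (z * x) m * stepMat z x 0 := by
  induction m with
  | zero => simp [prodMat]
  | succ m ih => rw [prodMat, ih, prodMat, stepMat_shift, Matrix.mul_assoc]

/-- When `z ^ k = 1`, rescaling `x` by `z` rotates the `k` factors cyclically, so the trace of the
product over a full period does not change. -/
lemma trace_prodMat_shift (z x : R) {k : ℕ} (hk : 0 < k) (hz : z ^ k = 1) :
    (prodMat z (z * x) k).trace = (prodMat z x k).trace := by
  obtain ⟨m, rfl⟩ : ∃ m, k = m + 1 := ⟨k - 1, by omega⟩
  have h0 : stepMat z x (m + 1) = stepMat z x 0 := by simp [stepMat, hz]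
  calc (prodMat z (z * x) (m + 1)).trace
      = (stepMat z x 0 * prodMat z (z * x) m).trace := by rw [prodMat, stepMat_shift, h0]
    _ = (prodMat z x (m + 1)).trace := by rw [Matrix.trace_mul_comm, ← prodMat_succ']

lemma prodMat_x_zero (z : R) (m : ℕ) : prodMat z 0 (m + 1) = !![1, 0; 1, 0] := by
  induction m with
  | zero => simp [prodMat, stepMat]
  | succ m ih => rw [prodMat, ih]; simp [stepMat]

lemma det_prodMat (z x : R) (m : ℕ) :
    (prodMat z x m).det = ∏ j ∈ Finset.range m, -(x * z ^ j) := by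
  induction m with
  | zero => simp [prodMat]
  | succ m ih =>
    rw [prodMat, Matrix.det_mul, ih, Finset.prod_range_succ, mul_comm]
    simp [stepMat, Matrix.det_fin_two]

lemma prodMat_add_period (z x : R) {k : ℕ} (hz : z ^ k = 1) (m : ℕ) :
    prodMat z x (m + k) = prodMat z x m * prodMat z x k := by
  induction m with
  | zero => simp [prodMat]
  | succ m ih =>
    have h : stepMat z x (m + k) = stepMat z x m := by simp [stepMat, pow_add, hz]
    rw [Nat.add_right_comm, prodMat, ih, prodMat, h, Matrix.mul_assoc]

lemma prodMat_mul_period (z x : R) {k : ℕ} (hz : z ^ k = 1) (n : ℕ) :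
    prodMat z x (k * n) = prodMat z x k ^ n := by
  induction n with
  | zero => simp [prodMat]
  | succ n ih => rw [Nat.mul_succ, prodMat_add_period z x hz, ih, pow_succ]

/-- As `det A = -1` and `trace A = 1`, Cayley–Hamilton reads `A ^ 2 = A + 1`, the relation defining
the Fibonacci numbers. -/
lemma pow_succ_eq_fib (A : Matrix (Fin 2) (Fin 2) R) (ht : A.trace = 1) (hd : A.det = -1) (n : ℕ) :
    A ^ (n + 1) = (Nat.fib (n + 1) : R) • A + (Nat.fib n : R) • 1 := by
  have hsq : A * A = A + 1 := by
    rw [Matrix.trace_fin_two] at ht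
    rw [Matrix.det_fin_two] at hd
    ext i j
    fin_cases i <;> fin_cases j <;> simp [Matrix.mul_apply, Fin.sum_univ_two] <;> grind
  induction n with
  | zero => simp
  | succ n ih =>
    rw [pow_succ, ih, add_mul, smul_mul_assoc, hsq, smul_mul_assoc, one_mul, Nat.fib_add_two]
    push_cast
    module

end Transfer

/-- Each factor `X` costs two steps of the recurrence. -/
lemma natDegree_prodMat_X (ζ : ℂ) (m : ℕ) (j : Fin 2) :
    (prodMat (C ζ) X m 0 j).natDegree ≤ (m + 1) / 2 ∧
      (prodMat (C ζ) X m 1 j).natDegree ≤ m / 2 := by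
  induction m with
  | zero => fin_cases j <;> simp [prodMat, Matrix.one_apply]
  | succ m ih =>
    rw [prodMat_succ_zero, prodMat_succ_one]
    refine ⟨(natDegree_add_le _ _).trans (max_le (by omega) ?_), ih.1⟩
    have h1 : ((X : ℂ[X]) * C ζ ^ m).natDegree ≤ 1 := by
      rw [← C_pow]; exact (natDegree_mul_C_le _ _).trans natDegree_X_le
    refine natDegree_mul_le.trans ?_
    omega

/-- The trace is constant as a polynomial in the weight: it is invariant under `X ↦ ζ X` and has
degree less than `k`. -/
lemma trace_prodMat (k : ℕ) (hk : 0 < k) (ζ : ℂ) (hζ : IsPrimitiveRoot ζ k) :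
    (prodMat ζ 1 k).trace = 1 := by
  -- For `k = 1` the degree bound fails: the bound on the trace is `(k + 1) / 2`.
  obtain rfl | hk2 : k = 1 ∨ 2 ≤ k := by omega
  · simp [prodMat, stepMat, Matrix.trace_fin_two]
  set T : ℂ[X] := (prodMat (C ζ) X k).trace with hT
  have heval : ∀ a : ℂ, T.eval a = (prodMat ζ a k).trace := fun a => by
    have := fun i => map_prodMat (evalRingHom a) (C ζ) X k i i
    simp only [coe_evalRingHom, eval_C, eval_X] at this
    simp [hT, Matrix.trace_fin_two, this]
  have hcomp : T.comp (C ζ * X) = T := by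
    have := fun i => map_prodMat (compRingHom (C ζ * X)) (C ζ) X k i i
    simp only [coe_compRingHom_apply, C_comp, X_comp] at this
    calc T.comp (C ζ * X) = (prodMat (C ζ) (C ζ * X) k).trace := by
          simp [hT, Matrix.trace_fin_two, this]
      _ = T := trace_prodMat_shift _ _ hk (by rw [← C_pow, hζ.pow_eq_one, C_1])
  have hdeg : T.natDegree < k := by
    have h0 := (natDegree_prodMat_X ζ k 0).1
    have h1 := (natDegree_prodMat_X ζ k 1).2
    have := natDegree_add_le (prodMat (C ζ) X k 0 0) (prodMat (C ζ) X k 1 1)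
    rw [hT, Matrix.trace_fin_two]
    omega
  have hconst : T = C (T.coeff 0) := by
    ext j
    rcases Nat.eq_zero_or_pos j with rfl | hj
    · simp
    rw [coeff_C_of_ne_zero hj.ne']
    by_cases hjk : j < k
    · have h := congrArg (fun p => coeff p j) hcomp
      simp only [comp_C_mul_X_coeff] at h
      by_contra hne
      exact hζ.pow_ne_one_of_pos_of_lt hj.ne' hjk (mul_left_cancel₀ hne (h.trans (mul_one _).symm))
    · exact coeff_eq_zero_of_natDegree_lt (by omega)
  rw [← heval 1, hconst, eval_C, coeff_zero_eq_eval_zero, heval 0]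
  obtain ⟨m, rfl⟩ : ∃ m, k = m + 1 := ⟨k - 1, by omega⟩
  simp [prodMat_x_zero, Matrix.trace_fin_two]

lemma det_prodMat_eq (k : ℕ) (hk : 0 < k) (ζ : ℂ) (hζ : IsPrimitiveRoot ζ k) :
    (prodMat ζ 1 k).det = -1 := by
  -- The constant terms of `X ^ k - 1 = ∏ j < k, (X - ζ ^ j)`.
  have h := congrArg (eval 0) (X_pow_sub_C_eq_prod hζ hk (one_pow k))
  simp only [eval_prod, eval_sub, eval_pow, eval_X, eval_C, zero_pow hk.ne', zero_sub,
    mul_one] at h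
  simp [det_prodMat, h]

lemma aeval_qFibF (ζ : ℂ) (m : ℕ) :
    aeval ζ (qFibF m) = prodMat ζ 1 m 1 0 := by
  induction m using Nat.twoStepInduction with
  | zero => simp [qFibF, prodMat]
  | one => simp [qFibF, prodMat, stepMat]
  | more m h0 h1 =>
    rw [prodMat_succ_one, prodMat_succ_zero, ← prodMat_succ_one, ← h0, ← h1]
    simp [qFibF]

/-- If ζ is a primitive k-th root of unity then F_{kn}(ζ) = F_n · F_k(ζ),
    where F_n is the ordinary Fibonacci number. -/
theorem qFibF_eval_primitiveRoot (k n : ℕ) (hk : 0 < k) (hn : 0 < n) (ζ : ℂ)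
    (hζ : IsPrimitiveRoot ζ k) :
    Polynomial.aeval ζ (qFibF (k * n)) = (Nat.fib n : ℂ) * Polynomial.aeval ζ (qFibF k) := by
  obtain ⟨m, rfl⟩ : ∃ m, n = m + 1 := ⟨n - 1, by omega⟩
  rw [aeval_qFibF, aeval_qFibF, prodMat_mul_period ζ 1 hζ.pow_eq_one,
    pow_succ_eq_fib _ (trace_prodMat k hk ζ hζ) (det_prodMat_eq k hk ζ hζ)]
  simp
end

section
/- Let k and n be positive integers and let ζ ∈ ℂ be a primitive k-th root of unity. Then G_{kn}(ζ) = F_n · G_k(ζ), where F_n denotes the n-th ordinary Fibonacci number and G_m(q) the q-Fibonacci polynomial evaluated at ζ. -/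
/-!
The recurrence for `G` is a linear recurrence with transfer matrices `A(c) = !![1, c; 1, 0]`, where
`c` runs through `ζ, ζ², …`. Since `ζ ^ k = 1` the transfer matrices are `k`-periodic, so
`G_{kn}(ζ)` is the lower left entry of `M ^ n`, with `M` the product over one period. The theorem
follows once `M ^ 2 = M + 1`, because then `M ^ n = F_n M + F_{n-1}`. By Cayley–Hamilton this
amounts to `det M = -1` and `tr M = 1`.

The determinant is the product of the `-ζ ^ i` over one period. For the trace, replace the
weights `ζ ^ i` by `x ζ ^ i` with an indeterminate `x`. The trace becomes a polynomial `T(x)`, and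
invariance of the trace under cyclic permutation gives `T(ζ x) = T(x)` (`trace_transferProd_mul`).
As `ζ` is a primitive `k`-th root of unity and `deg T < k`, the polynomial `T` is constant, with
value `T(0) = 1`.
-/

open Polynomial

/-- The product `A(c q ^ (n - 1)) ⋯ A(c q) A(c)` of the transfer matrices
`A(c) = !![1, c; 1, 0]`. -/
def transferProd {R : Type*} [CommRing R] (q c : R) : ℕ → Matrix (Fin 2) (Fin 2) R
  | 0 => 1
  | n + 1 => !![1, c * q ^ n; 1, 0] * transferProd q c n

section transferProd

variable {R S : Type*} [CommRing R] [CommRing S] (q c : R)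

lemma transferProd_succ_zero (n : ℕ) (j : Fin 2) :
    transferProd q c (n + 1) 0 j
      = transferProd q c n 0 j + c * q ^ n * transferProd q c n 1 j := by
  simp [transferProd, Matrix.mul_apply, Fin.sum_univ_two]

lemma transferProd_succ_one (n : ℕ) (j : Fin 2) :
    transferProd q c (n + 1) 1 j = transferProd q c n 0 j := by
  simp [transferProd, Matrix.mul_apply, Fin.sum_univ_two]

lemma transferProd_add (m n : ℕ) :
    transferProd q c (m + n) = transferProd q (c * q ^ n) m * transferProd q c n := by
  induction m with
  | zero => simp [transferProd]
  | succ m ih =>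
    rw [add_right_comm, transferProd, transferProd, ih, Matrix.mul_assoc,
      mul_assoc c, ← pow_add, add_comm n m]

lemma transferProd_mul_period {k : ℕ} (hq : q ^ k = 1) (n : ℕ) :
    transferProd q c (k * n) = transferProd q c k ^ n := by
  induction n with
  | zero => simp [transferProd]
  | succ n ih => rw [mul_add_one, add_comm, transferProd_add, pow_mul, hq, ih]; simp [pow_succ']

lemma det_transferProd (n : ℕ) :
    (transferProd q c n).det = (-1) ^ n * c ^ n * q ^ (n.choose 2) := by
  induction n with
  | zero => simp [transferProd]
  | succ n ih =>
    rw [transferProd, Matrix.det_mul, ih, Matrix.det_fin_two_of, Nat.choose_succ_succ' n 1,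
      Nat.choose_one_right]
    ring

/-- Scaling all weights by `q` rotates the period by one step, which the trace does not see. -/
lemma trace_transferProd_mul {k : ℕ} (hq : q ^ k = 1) :
    (transferProd q (c * q) k).trace = (transferProd q c k).trace := by
  cases k with
  | zero => simp [transferProd]
  | succ m =>
    have h1 : transferProd q c 1 = !![1, c; 1, 0] := by simp [transferProd]
    rw [transferProd_add q c m 1, pow_one, h1, Matrix.trace_mul_comm, transferProd, mul_assoc,
      ← pow_succ', hq, mul_one]

lemma map_transferProd_apply (f : R →+* S) (n : ℕ) (i j : Fin 2) :
    f (transferProd q c n i j) = transferProd (f q) (f c) n i j := by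
  induction n generalizing i with
  | zero => fin_cases i <;> fin_cases j <;> simp [transferProd]
  | succ n ih =>
    fin_cases i
    · simp [transferProd_succ_zero, ih]
    · simp [transferProd_succ_one, ih]

lemma map_trace_transferProd (f : R →+* S) (n : ℕ) :
    f (transferProd q c n).trace = (transferProd (f q) (f c) n).trace := by
  simp [Matrix.trace_fin_two, map_transferProd_apply]

lemma trace_transferProd_zero {k : ℕ} (hk : 0 < k) : (transferProd q 0 k).trace = 1 := by
  have h (n : ℕ) : transferProd q 0 n 0 0 = 1 ∧ transferProd q 0 n 0 1 = 0 := by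
    induction n with
    | zero => simp [transferProd]
    | succ n ih => simp [transferProd_succ_zero, ih]
  obtain ⟨m, rfl⟩ := Nat.exists_eq_add_of_lt hk
  simp [Matrix.trace_fin_two, transferProd_succ_one, h]

/-- Multiplication by a transfer matrix puts the factor `X` on the second row only, and moves the
first row down without it, so the degree grows by at most one in every two steps. -/
lemma natDegree_transferProd_le (a : R) (n : ℕ) (j : Fin 2) :
    2 * (transferProd (C a) X n 0 j).natDegree ≤ n + 1 ∧
      2 * (transferProd (C a) X n 1 j).natDegree ≤ n := by
  induction n with
  | zero => simp [transferProd, Matrix.one_apply, apply_ite natDegree]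
  | succ n ih =>
    rw [transferProd_succ_zero, transferProd_succ_one]
    refine ⟨?_, ih.1⟩
    have h1 := natDegree_add_le (transferProd (C a) X n 0 j)
      (X * C a ^ n * transferProd (C a) X n 1 j)
    have h2 : (X * C a ^ n * transferProd (C a) X n 1 j).natDegree
        ≤ 1 + (transferProd (C a) X n 1 j).natDegree := by
      refine natDegree_mul_le.trans (Nat.add_le_add_right ?_ _)
      rw [← C_pow]
      exact (natDegree_mul_C_le _ _).trans natDegree_X_le
    omega

end transferProd

/-- The trace of the product over one period does not depend on the scale `x` of the weights:
as a polynomial in `x` it has degree less than `k` and is invariant under `x ↦ ζ x`. -/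
lemma trace_transferProd_eq_one {R : Type*} [CommRing R] [IsDomain R] {ζ : R} {k : ℕ} (hk : 0 < k)
    (hζ : IsPrimitiveRoot ζ k) (x : R) : (transferProd ζ x k).trace = 1 := by
  -- The degree bound `(k + 1) / 2` is smaller than `k` only for `k ≠ 1`.
  obtain rfl | hk1 := eq_or_ne k 1
  · simp [transferProd, Matrix.trace_fin_two]
  set T : R[X] := (transferProd (C ζ) X k).trace with hT
  have hdeg : T.natDegree < k := by
    have h0 := (natDegree_transferProd_le ζ k 0).1
    have h1 := (natDegree_transferProd_le ζ k 1).2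
    have h2 := natDegree_add_le (transferProd (C ζ) X k 0 0) (transferProd (C ζ) X k 1 1)
    rw [hT, Matrix.trace_fin_two]
    omega
  have hcomp : T.comp (C ζ * X) = T := by
    have h := map_trace_transferProd (C ζ) X (compRingHom (C ζ * X)) k
    simp only [coe_compRingHom_apply, C_comp, X_comp] at h
    rw [hT, h, mul_comm, trace_transferProd_mul]
    rw [← C_pow, hζ.pow_eq_one, C_1]
  have hconst : T = C (T.coeff 0) := by
    ext j
    rw [coeff_C]
    split_ifs with hj
    · rw [hj]
    by_cases hjk : j < k
    · have h := congrArg (fun p : R[X] => p.coeff j) hcomp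
      simp only [comp_C_mul_X_coeff] at h
      have h' : T.coeff j * (ζ ^ j - 1) = 0 := by linear_combination h
      exact (mul_eq_zero.1 h').resolve_right
        (sub_ne_zero.2 (hζ.pow_ne_one_of_pos_of_lt hj hjk))
    · exact coeff_eq_zero_of_natDegree_lt (by omega)
  have heval (y : R) : T.eval y = (transferProd ζ y k).trace := by
    have h := map_trace_transferProd (C ζ) X (evalRingHom y) k
    simpa using h
  have hxy : T.eval x = T.eval 0 := by rw [hconst, eval_C, eval_C]
  rw [← heval, hxy, heval, trace_transferProd_zero _ hk]

lemma det_transferProd_eq_neg_one {R : Type*} [CommRing R] [IsDomain R] {ζ : R} {k : ℕ}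
    (hk : 0 < k) (hζ : IsPrimitiveRoot ζ k) : (transferProd ζ ζ k).det = -1 := by
  rw [det_transferProd, hζ.pow_eq_one, mul_one, Nat.choose_two_right]
  obtain ⟨m, hm⟩ | ⟨m, hm⟩ := Nat.even_or_odd k
  · -- Here `ζ ^ m` is a square root of `1` other than `1`.
    have hsq : ζ ^ m * ζ ^ m = 1 := by rw [← pow_add, ← hm, hζ.pow_eq_one]
    have hne : ζ ^ m ≠ 1 := hζ.pow_ne_one_of_pos_of_lt (by omega) (by omega)
    have hneg : ζ ^ m = -1 := (mul_self_eq_one_iff.1 hsq).resolve_left hne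
    have hexp : k * (k - 1) / 2 = m * (k - 1) := by
      rw [hm, ← two_mul, mul_assoc, Nat.mul_div_cancel_left _ two_pos]
    rw [hexp, pow_mul, hneg, ← pow_add]
    exact Odd.neg_one_pow ⟨k - 1, by omega⟩
  · have hexp : k * (k - 1) / 2 = k * m := by
      rw [hm, Nat.add_sub_cancel, mul_left_comm, Nat.mul_div_cancel_left _ two_pos]
    rw [hexp, pow_mul, hζ.pow_eq_one, one_pow, mul_one]
    exact Odd.neg_one_pow ⟨m, hm⟩

lemma pow_apply_one_zero_eq_fib {R : Type*} [CommRing R] (M : Matrix (Fin 2) (Fin 2) R)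
    (htr : M.trace = 1) (hdet : M.det = -1) (n : ℕ) :
    (M ^ n) 1 0 = (Nat.fib n : R) * M 1 0 := by
  rw [Matrix.trace_fin_two] at htr
  rw [Matrix.det_fin_two] at hdet
  have hsq : M * M = M + 1 := by
    ext i j
    fin_cases i <;> fin_cases j <;> simp [Matrix.mul_apply, Fin.sum_univ_two]
    · linear_combination M 0 0 * htr - hdet
    · linear_combination M 0 1 * htr
    · linear_combination M 1 0 * htr
    · linear_combination M 1 1 * htr - hdet
  have hpow (n : ℕ) : M ^ (n + 1) = (Nat.fib (n + 1) : R) • M + (Nat.fib n : R) • 1 := by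
    induction n with
    | zero => simp
    | succ n ih =>
      rw [pow_succ, ih, add_mul, smul_mul_assoc, smul_mul_assoc, hsq, one_mul,
        Nat.fib_add_two (n := n)]
      push_cast
      module
  cases n with
  | zero => simp
  | succ n => simp [hpow]

lemma aeval_qFibG_s14 {R : Type*} [CommRing R] (ζ : R) (n : ℕ) :
    aeval ζ (qFibG n) = transferProd ζ ζ n 1 0 := by
  have h (n : ℕ) : aeval ζ (qFibG n) = transferProd ζ ζ n 1 0 ∧
      aeval ζ (qFibG (n + 1)) = transferProd ζ ζ n 0 0 := by
    induction n with
    | zero => simp [qFibG, transferProd]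
    | succ n ih =>
      rw [transferProd_succ_one, transferProd_succ_zero, ← ih.1, ← ih.2]
      simp [qFibG, pow_succ']
  exact (h n).1

/-- If ζ is a primitive k-th root of unity then G_{kn}(ζ) = F_n · G_k(ζ),
    where F_n is the ordinary Fibonacci number. -/
theorem qFibG_eval_primitiveRoot (k n : ℕ) (hk : 0 < k) (hn : 0 < n) (ζ : ℂ)
    (hζ : IsPrimitiveRoot ζ k) :
    Polynomial.aeval ζ (qFibG (k * n)) = (Nat.fib n : ℂ) * Polynomial.aeval ζ (qFibG k) := by
  rw [aeval_qFibG_s14, aeval_qFibG_s14, transferProd_mul_period _ _ hζ.pow_eq_one]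
  exact pow_apply_one_zero_eq_fib _ (trace_transferProd_eq_one hk hζ ζ)
    (det_transferProd_eq_neg_one hk hζ) n
end
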